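/- Let G be a connected graph with chromatic number χ(G) = 2. Then G is enumeratively chromatic-choosable if and only if the core of G is a copy of K₁, of an even cycle C_{2k+2} for some k ∈ ℕ, or of the complete bipartite graph K_{2,3}. -/

import Mathlib

/-!
Necessity only uses `m = 2`. A connected graph with chromatic number 2 has exactly two colorings
from constant lists of size 2, so it suffices to find a 2-assignment with at most one coloring
(`IsBad`) whenever the core is not on the list. Such an assignment on the core extends to all of `G`
by forcing one vertex after the other (`isBad_of_induce`). The lists are built from one device: along
a path, lists of size 2 can be chosen so that a color at one end forces the colors of the interior
and excludes a color at the other end (`exists_killing_path`). It handles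

* every bipartite theta graph other than `K_{2,3}` (`isBad_of_theta`);
* a vertex `v` at which two disjoint gadgets meet, each a cycle through `v` or a path from `v` to a
  cycle (`isBad_of_kills`).

Together with `K_{2,4}` (`isBad_of_K24`) this suffices. The core is connected and has no vertex of
degree 1, so at any edge leaving a vertex set there is an ear of that set or a gadget of this kind
(`exists_ear`). If the core contains `K_{2,3}`, an ear produces one of these theta graphs or
`K_{2,4}`, so the core is `K_{2,3}`; otherwise it is `K₁` or a cycle without ears and chords
(`core_structure`).

For sufficiency, attaching a vertex of degree 1 multiplies the constant-list count by `m - 1` and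
every other count by at least that (`IsGood.of_delStep`), so only the three cores remain.

* For an even cycle with lists that are not all equal, cut it between two consecutive different
  lists and sum over the color of the first vertex. A color missing from the last list contributes
  at least a full power of `m - 1`; the other colors contribute enough to reach the constant-list
  value `(m - 1) ^ (2 * k + 2) + (m - 1)` (`le_sum_pathCount`).
* For `K_{2,3}`, the count is a sum over pairs of colors on the side of size 2 of products of three
  factors. The two lists on that side are matched by a bijection that is the identity on common
  colors. Bounds for matched and unmatched pairs that are linear in the number of missing colors
  add up to the constant-list value (`le_sum_K23`); `m = 2` is treated separately.
-/

/-- A proper `L`-coloring of `G`: each vertex gets a color from its list,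
and adjacent vertices get different colors. -/
def IsProperListColoring {V : Type*} (G : SimpleGraph V) (L : V → Finset ℕ) (f : V → ℕ) : Prop :=
  (∀ v, f v ∈ L v) ∧ ∀ ⦃u w : V⦄, G.Adj u w → f u ≠ f w

/-- `P(G,L)`: the number of proper `L`-colorings of `G`. -/
noncomputable def numListColorings {V : Type*} (G : SimpleGraph V) (L : V → Finset ℕ) : ℕ :=
  Nat.card {f : V → ℕ // IsProperListColoring G L f}

/-- The chromatic polynomial `P(G,m)`: the number of proper colorings using colors from `{1,…,m}`. -/
noncomputable def chromPoly {V : Type*} (G : SimpleGraph V) (m : ℕ) : ℕ :=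
  numListColorings G (fun _ => Finset.Icc 1 m)

/-- The list color function `P_ℓ(G,m)`: the minimum number of proper `L`-colorings
over all `m`-assignments `L`. -/
noncomputable def listColorFn {V : Type*} (G : SimpleGraph V) (m : ℕ) : ℕ :=
  sInf {n | ∃ L : V → Finset ℕ, (∀ v, (L v).card = m) ∧ numListColorings G L = n}

/-- One step of deleting a vertex of degree 1: `T` is obtained from `S` by removing a
vertex `v ∈ S` having exactly one neighbor inside `S`. -/
def DelStep {V : Type*} (G : SimpleGraph V) (S T : Set V) : Prop :=
  ∃ v ∈ S, T = S \ {v} ∧ {w ∈ S | G.Adj v w}.ncard = 1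

/-! ### Forcing colors along paths -/

/-- `G` has a 2-assignment with at most one proper list coloring. Having none is allowed as well:
a connected graph with chromatic number 2 has exactly two colorings from constant lists of size 2,
so either case makes the list color function at 2 too small. -/
def IsBad {V : Type*} (G : SimpleGraph V) : Prop :=
  ∃ L : V → Finset ℕ, (∀ v, (L v).card = 2) ∧
    ∀ f g, IsProperListColoring G L f → IsProperListColoring G L g → f = g

/-- Given a color `α` at `s`, lists of size 2 on the vertices of a path `R` leaving `s` can force the
color of every vertex of `R`, with any chosen color `β` at the last one. If `R` is a single vertex
its list is `{α, β}`, which is why `α ≠ β` is needed there. -/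
theorem exists_forcing_chain {V : Type*} (R : List V) : ∀ (_ : R ≠ []) (_ : R.Nodup) (s : V) (α β : ℕ),
    (α ≠ β ∨ 2 ≤ R.length) →
    ∃ (M : V → Finset ℕ) (c : V → ℕ), (∀ v, (M v).card = 2) ∧
      ∀ f : V → ℕ, (∀ v ∈ R, f v ∈ M v) → (s :: R).IsChain (fun x y => f x ≠ f y) →
        f s = α → (∀ v ∈ R, f v = c v) ∧ ∀ t, t ∈ R.getLast? → f t = β := by
  classical
  induction R with
  | nil => simp
  | cons r R ih =>
    intro _ hnd s α β hab
    rw [List.nodup_cons] at hnd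
    by_cases hR : R = []
    · subst hR
      have hab' : α ≠ β := by simpa using hab
      refine ⟨fun _ => {α, β}, fun _ => β, fun _ => Finset.card_pair hab', ?_⟩
      intro f hM hch hs
      simp at hM hch ⊢
      rcases hM with h | h
      · exact absurd (hs.trans h.symm) hch
      · exact h
    · obtain ⟨x, hx⟩ : ∃ x, x ∉ ({α, β} : Finset ℕ) := Infinite.exists_notMem_finset _
      simp only [Finset.mem_insert, Finset.mem_singleton, not_or] at hx
      obtain ⟨M, c, hM, H⟩ := ih hR hnd.2 r x β (Or.inl hx.2)
      refine ⟨Function.update M r {α, x}, Function.update c r x, ?_, ?_⟩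
      · intro v
        by_cases hv : v = r
        · subst hv; simpa using Finset.card_pair (Ne.symm hx.1)
        · simpa [hv] using hM v
      · intro f hf hch hs
        rw [List.isChain_cons_cons] at hch
        have hr : f r = x := by
          have := hf r (by simp)
          simp at this
          rcases this with h | h
          · exact absurd (hs.trans h.symm) hch.1
          · exact h
        have hne : ∀ v ∈ R, v ≠ r := fun v hv h => hnd.1 (h ▸ hv)
        obtain ⟨h1, h2⟩ := H f (fun v hv => by
          have := hf v (by simp [hv]); simpa [hne v hv] using this) hch.2 hr
        refine ⟨?_, ?_⟩
        · intro v hv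
          rcases List.mem_cons.1 hv with rfl | hv
          · simpa using hr
          · simpa [hne v hv] using h1 v hv
        · intro t ht
          apply h2
          obtain ⟨a, l, rfl⟩ := List.exists_cons_of_ne_nil hR
          simpa using ht

/-- Let `R` be the interior of an `s`–`t` path. Suitable lists of size 2 on `R` ensure that color
`α` at `s` forces all colors on `R` and excludes color `β` at `t`. -/
theorem exists_killing_path {V : Type*} (R : List V) (hR : R ≠ []) (hnd : R.Nodup) (s t : V) (α β : ℕ)
    (hab : α ≠ β ∨ 2 ≤ R.length) :
    ∃ (M : V → Finset ℕ) (c : V → ℕ), (∀ v, (M v).card = 2) ∧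
      ∀ f : V → ℕ, (∀ v ∈ R, f v ∈ M v) → (s :: R ++ [t]).IsChain (fun x y => f x ≠ f y) →
        f s = α → (∀ v ∈ R, f v = c v) ∧ f t ≠ β := by
  obtain ⟨M, c, hM, H⟩ := exists_forcing_chain R hR hnd s α β hab
  refine ⟨M, c, hM, fun f hf hch hs => ?_⟩
  rw [List.isChain_append] at hch
  obtain ⟨h1, h2⟩ := H f hf hch.1 hs
  refine ⟨h1, ?_⟩
  have h3 := h2 _ (List.getLast_mem_getLast? hR)
  have := hch.2.2 (R.getLast hR) (by
    obtain ⟨a, l, rfl⟩ := List.exists_cons_of_ne_nil hR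
    simp [List.getLast?_eq_some_getLast]) t (by simp)
  rw [h3] at this
  exact this.symm

/-- A proper coloring of a path from `{0, 1}` alternates, so the colors of the ends are linked by the
parity of the number of interior vertices. -/
theorem two_color_path {V : Type*} (f : V → ℕ) (t : V) (P : List V) : ∀ s : V,
    (∀ v ∈ s :: t :: P, f v ∈ ({0, 1} : Finset ℕ)) →
    (s :: P ++ [t]).IsChain (fun x y => f x ≠ f y) →
    (f t + f s + P.length) % 2 = 1 := by
  induction P with
  | nil =>
    intro s h hch
    simp at h hch ⊢
    omega
  | cons r P ih =>
    intro s h hch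
    rw [List.cons_append, List.cons_append, List.isChain_cons_cons] at hch
    have := ih r (by intro v hv; apply h; simp at hv ⊢; tauto) hch.2
    have h1 := h s (by simp)
    have h2 := h r (by simp)
    simp at h1 h2 ⊢
    have := hch.1
    omega

theorem chain_ne {V : Type*} {G : SimpleGraph V} {L : V → Finset ℕ} {f : V → ℕ}
    (hf : IsProperListColoring G L f) {l : List V} (h : l.IsChain G.Adj) :
    l.IsChain (fun x y => f x ≠ f y) :=
  h.imp fun _ _ hxy => hf.2 hxy

/-- Theta graphs with two paths `Q`, `R` having at least two interior vertices. With lists `{0, 1}`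
on `s`, `t` and the third path `P`, the color of `s` determines that of `t`; the lists on `Q`
exclude the resulting pair with color 0 at `s`, and those on `R` the pair with color 1 at `s`, so
there is no coloring at all. -/
theorem isBad_of_theta_long {V : Type*} {G : SimpleGraph V} {s t : V} {P Q R : List V}
    (hnd : (s :: t :: (P ++ Q ++ R)).Nodup)
    (hP : (s :: P ++ [t]).IsChain G.Adj) (hQ : (s :: Q ++ [t]).IsChain G.Adj)
    (hR : (s :: R ++ [t]).IsChain G.Adj) (hQ2 : 2 ≤ Q.length) (hR2 : 2 ≤ R.length) :
    IsBad G := by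
  classical
  have hQn : Q ≠ [] := by rintro rfl; simp at hQ2
  have hRn : R ≠ [] := by rintro rfl; simp at hR2
  simp only [List.nodup_cons, List.nodup_append, List.mem_cons, List.mem_append, not_or] at hnd
  obtain ⟨⟨hst, ⟨hsP, hsQ⟩, hsR⟩, ⟨⟨htP, htQ⟩, htR⟩, ⟨⟨hPn, hQnd, hPQ⟩, hRnd, hPQR⟩⟩ := hnd
  -- along `P`, color 0 at `s` gives `(|P| + 1) % 2` at `t`, and color 1 gives `|P| % 2`
  obtain ⟨M, _, hM, HM⟩ := exists_killing_path Q hQn hQnd s t 0 ((P.length + 1) % 2) (Or.inr hQ2)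
  obtain ⟨N, _, hN, HN⟩ := exists_killing_path R hRn hRnd s t 1 (P.length % 2) (Or.inr hR2)
  refine ⟨fun v => if v ∈ Q then M v else if v ∈ R then N v else {0, 1}, ?_, ?_⟩
  · intro v
    dsimp only
    split_ifs <;> simp [hM, hN]
  · intro f g hf _
    exfalso
    have hfP : ∀ v ∈ s :: t :: P, f v ∈ ({0, 1} : Finset ℕ) := by
      intro v hv
      have h := hf.1 v
      have h1 : v ∉ Q := by
        rcases List.mem_cons.1 hv with rfl | hv
        · exact hsQ
        rcases List.mem_cons.1 hv with rfl | hv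
        · exact htQ
        exact fun hq => hPQ v hv v hq rfl
      have h2 : v ∉ R := by
        rcases List.mem_cons.1 hv with rfl | hv
        · exact hsR
        rcases List.mem_cons.1 hv with rfl | hv
        · exact htR
        exact fun hq => hPQR v (Or.inl hv) v hq rfl
      simpa [h1, h2] using h
    have hpar := two_color_path f t P s hfP (chain_ne hf hP)
    have h1 := hfP s (by simp)
    have h2 := hfP t (by simp)
    have h3 := fun h => (HM f (fun v hv => by simpa [hv] using hf.1 v) (chain_ne hf hQ) h).2
    have h4 := fun h => (HN f (fun v hv => by
      have hv' : v ∉ Q := fun hq => hPQR v (Or.inr hq) v hv rfl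
      simpa [hv, hv'] using hf.1 v) (chain_ne hf hR) h).2
    simp at h1 h2
    omega

/-! ### Assignments with at most one coloring: extension, small obstructions, excluded colors -/

theorem exists_boundary_adj {V : Type*} {G : SimpleGraph V} (hG : G.Connected) {S : Set V}
    {a b : V} (ha : a ∈ S) (hb : b ∉ S) : ∃ u ∈ S, ∃ w, w ∉ S ∧ G.Adj u w := by
  obtain ⟨p⟩ := hG.preconnected a b
  obtain ⟨d, _, h1, h2⟩ := p.exists_boundary_dart S ha hb
  exact ⟨d.fst, h1, d.snd, h2, d.adj⟩

/-- A 2-assignment that forces every color on a nonempty vertex set `S` of a connected graph extends to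
one forcing every color: a vertex `w` outside `S` with a neighbor `u` in `S`, whose color is forced
to be `c u`, gets the list `{c u, c u + 1}`, and then joins `S`. The induction is on the number of
vertices outside `S`. -/
theorem isBad_of_forced {V : Type*} [Finite V] {G : SimpleGraph V} (hG : G.Connected) :
    ∀ (n : ℕ) (S : Set V), Sᶜ.ncard = n → S.Nonempty → ∀ (L : V → Finset ℕ) (c : V → ℕ),
    (∀ v, (L v).card = 2) →
    (∀ f : V → ℕ, (∀ v ∈ S, f v ∈ L v) → (∀ u ∈ S, ∀ w ∈ S, G.Adj u w → f u ≠ f w) →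
      ∀ v ∈ S, f v = c v) → IsBad G := by
  classical
  intro n
  induction n with
  | zero =>
    intro S hS _ L c hL h
    rw [Set.ncard_eq_zero, Set.compl_empty_iff] at hS
    subst hS
    refine ⟨L, hL, fun f g hf hg => ?_⟩
    funext v
    rw [h f (fun v _ => hf.1 v) (fun u _ w _ h => hf.2 h) v trivial,
      h g (fun v _ => hg.1 v) (fun u _ w _ h => hg.2 h) v trivial]
  | succ n ih =>
    intro S hS hne L c hL h
    obtain ⟨a, ha⟩ := hne
    obtain ⟨b, hb⟩ : Sᶜ.Nonempty := by
      rw [← Set.ncard_pos]; omega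
    obtain ⟨u, hu, w, hw, huw⟩ := exists_boundary_adj hG ha hb
    refine ih (insert w S) ?_ ⟨w, by simp⟩ (Function.update L w {c u, c u + 1})
      (Function.update c w (c u + 1)) ?_ ?_
    · have : (insert w S)ᶜ = Sᶜ \ {w} := by ext; simp; tauto
      rw [this, Set.ncard_sdiff_singleton_of_mem hw, hS]; rfl
    · intro v
      by_cases hv : v = w
      · subst hv; simp
      · simpa [hv] using hL v
    · intro f hf hp
      have hneq : ∀ v ∈ S, v ≠ w := fun v hv h => hw (h ▸ hv)
      have key := h f (fun v hv => by simpa [hneq v hv] using hf v (by simp [hv]))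
        (fun x hx y hy => hp x (by simp [hx]) y (by simp [hy]))
      intro v hv
      rcases hv with rfl | hv
      · have h1 := hf v (by simp)
        have h2 := hp u (by simp [hu]) v (by simp) huw
        rw [key u hu] at h2
        simp at h1 ⊢
        omega
      · simpa [hneq v hv] using key v hv

/-- Having a 2-assignment with at most one coloring passes from an induced subgraph to a connected
graph containing it. If the subgraph has an assignment without colorings, any lists elsewhere do. -/
theorem isBad_of_induce {V : Type*} [Finite V] {G : SimpleGraph V} (hG : G.Connected) {S : Set V}
    (hS : S.Nonempty) (h : IsBad (G.induce S)) : IsBad G := by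
  classical
  obtain ⟨L, hL, H⟩ := h
  by_cases hex : ∃ c, IsProperListColoring (G.induce S) L c
  · obtain ⟨c, hc⟩ := hex
    refine isBad_of_forced hG _ S rfl hS (fun v => if hv : v ∈ S then L ⟨v, hv⟩ else {0, 1})
      (fun v => if hv : v ∈ S then c ⟨v, hv⟩ else 0) ?_ ?_
    · intro v
      split_ifs <;> simp [hL]
    · intro f hf hp v hv
      have := H (fun x => f x) c ⟨fun x => by simpa using hf x x.2, fun x y hxy =>
        hp x x.2 y y.2 hxy⟩ hc
      simpa [hv] using congrFun this ⟨v, hv⟩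
  · refine ⟨fun v => if hv : v ∈ S then L ⟨v, hv⟩ else {0, 1}, ?_, ?_⟩
    · intro v
      beta_reduce
      split_ifs <;> simp [hL]
    · intro f _ hf
      exact absurd ⟨fun x => f x, fun x => by simpa using hf.1 x, fun x y hxy => hf.2 hxy⟩ hex

/-- Theta graphs in which two of the `s`–`t` paths have one interior vertex (`p` and `q`) and the
third one, `R`, has at least two. The lists `{0, 1}`, `{0, 2}`, `{0, 1}`, `{1, 2}` on `s, t, p, q`
force color 0 at `s`; the lists on `R` are then chosen to exclude color 0 at `t` and to force the
colors of `R`, which leaves at most one coloring. -/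
theorem isBad_of_theta_short {V : Type*} [Finite V] {G : SimpleGraph V} (hG : G.Connected)
    {s t p q : V} {R : List V}
    (hnd : (s :: t :: p :: q :: R).Nodup) (hsp : G.Adj s p) (hpt : G.Adj p t) (hsq : G.Adj s q)
    (hqt : G.Adj q t) (hR : (s :: R ++ [t]).IsChain G.Adj) (hR2 : 2 ≤ R.length) : IsBad G := by
  classical
  have hRn : R ≠ [] := by rintro rfl; simp at hR2
  simp only [List.nodup_cons, List.mem_cons, not_or] at hnd
  obtain ⟨⟨hst, hsp', hsq', hsR⟩, ⟨htp, htq, htR⟩, ⟨hpq, hpR⟩, hqR, hRnd⟩ := hnd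
  obtain ⟨M, c, hM, HM⟩ := exists_killing_path R hRn hRnd s t 0 0 (Or.inr hR2)
  refine isBad_of_forced hG _ {v | v = s ∨ v = t ∨ v = p ∨ v = q ∨ v ∈ R} rfl ⟨s, by simp⟩
    (fun v => if v = s then {0, 1} else if v = t then {0, 2} else if v = p then {0, 1} else
      if v = q then {1, 2} else M v)
    (fun v => if v = s then 0 else if v = t then 2 else if v = p then 1 else
      if v = q then 1 else c v) ?_ ?_
  · intro v
    split_ifs <;> simp [hM]
  · intro f hf hp
    have hmem : ∀ x ∈ s :: R ++ [t], x ∈ {v | v = s ∨ v = t ∨ v = p ∨ v = q ∨ v ∈ R} := by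
      intro x hx
      rw [List.mem_append, List.mem_cons, List.mem_singleton] at hx
      rcases hx with (h | h) | h
      · exact Or.inl h
      · exact Or.inr (Or.inr (Or.inr (Or.inr h)))
      · exact Or.inr (Or.inl h)
    have fs := hf s (by simp)
    have ft := hf t (by simp)
    have fp := hf p (by simp)
    have fq := hf q (by simp)
    have e1 := hp s (by simp) p (by simp) hsp
    have e2 := hp p (by simp) t (by simp) hpt
    have e3 := hp s (by simp) q (by simp) hsq
    have e4 := hp q (by simp) t (by simp) hqt
    simp [Ne.symm hst, Ne.symm hsp', Ne.symm hsq', Ne.symm htp, Ne.symm htq, Ne.symm hpq]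
      at fs ft fp fq
    have hs0 : f s = 0 := by
      rcases fs with h | h
      · exact h
      · rw [h] at e1 e3
        rcases ft with h' | h' <;> rw [h'] at e2 e4 <;> omega
    rw [hs0] at e1 e3
    have hne : ∀ v ∈ R, v ≠ s ∧ v ≠ t ∧ v ≠ p ∧ v ≠ q := by
      intro v hv
      exact ⟨fun h => hsR (h ▸ hv), fun h => htR (h ▸ hv), fun h => hpR (h ▸ hv),
        fun h => hqR (h ▸ hv)⟩
    have hch : (s :: R ++ [t]).IsChain (fun x y => f x ≠ f y) := by
      refine List.IsChain.imp_of_mem_imp ?_ hR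
      intro x y hx hy hxy
      exact hp x (hmem x hx) y (hmem y hy) hxy
    obtain ⟨h1, h2⟩ := HM f (fun v hv => by
      obtain ⟨a, b, c, d⟩ := hne v hv
      simpa [a, b, c, d] using hf v (by simp [hv])) hch hs0
    intro v hv
    have fp' : f p = 1 := by clear fs ft fq e2 e3 e4; omega
    have ft' : f t = 2 := ft.resolve_left h2
    have fq' : f q = 1 := by clear fs ft fp e1 e2 e3; omega
    rcases hv with rfl | rfl | rfl | rfl | hv
    · simpa using hs0
    · simpa [Ne.symm hst] using ft'
    · simpa [Ne.symm hsp', Ne.symm htp] using fp'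
    · simpa [Ne.symm hsq', Ne.symm htq, Ne.symm hpq] using fq'
    · obtain ⟨a, b, c, d⟩ := hne v hv
      simpa [a, b, c, d] using h1 v hv

/-- A graph containing `K_{2,4}` has a 2-assignment without colorings: the lists `{0, 1}` and `{2, 3}`
on the side of size 2, and their four transversals on the side of size 4. -/
theorem isBad_of_K24 {V : Type*} {G : SimpleGraph V} {s t p q r w : V}
    (hnd : [s, t, p, q, r, w].Nodup) (hsp : G.Adj s p) (hsq : G.Adj s q) (hsr : G.Adj s r)
    (hsw : G.Adj s w) (htp : G.Adj t p) (htq : G.Adj t q) (htr : G.Adj t r) (htw : G.Adj t w) :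
    IsBad G := by
  classical
  simp at hnd
  obtain ⟨⟨h1, h2, h3, h4, h5⟩, ⟨h6, h7, h8, h9⟩, ⟨h10, h11, h12⟩, ⟨h13, h14⟩, h15⟩ := hnd
  refine ⟨fun v => if v = s then {0, 1} else if v = t then {2, 3} else if v = p then {0, 2} else
      if v = q then {0, 3} else if v = r then {1, 2} else {1, 3}, ?_, ?_⟩
  · intro v
    dsimp only
    split_ifs <;> simp
  · intro f g hf _
    exfalso
    have fs := hf.1 s
    have ft := hf.1 t
    have fp := hf.1 p
    have fq := hf.1 q
    have fr := hf.1 r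
    have fw := hf.1 w
    simp [Ne.symm h1, Ne.symm h2, Ne.symm h3, Ne.symm h4, Ne.symm h5, Ne.symm h6, Ne.symm h7,
      Ne.symm h8, Ne.symm h9, Ne.symm h10, Ne.symm h11, Ne.symm h12, Ne.symm h13, Ne.symm h14,
      Ne.symm h15] at fs ft fp fq fr fw
    have := hf.2 hsp
    have := hf.2 hsq
    have := hf.2 hsr
    have := hf.2 hsw
    have := hf.2 htp
    have := hf.2 htq
    have := hf.2 htr
    have := hf.2 htw
    omega

/-- For every color `c`, there are lists of size 2 on `X` such that no proper coloring of `G`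
respecting them has color `c` at `v`. -/
def Kills {V : Type*} (G : SimpleGraph V) (X : List V) (v : V) : Prop :=
  ∀ c : ℕ, ∃ M : V → Finset ℕ, (∀ x, (M x).card = 2) ∧
    ∀ f : V → ℕ, (∀ x ∈ X, f x ∈ M x) → (∀ u w, G.Adj u w → f u ≠ f w) → f v ≠ c

/-- If disjoint vertex sets `X` and `Y` avoiding `v` can each exclude an arbitrary color at `v`, let `X`
exclude 0, let `Y` exclude 1, and give `v` the list `{0, 1}`. -/
theorem isBad_of_kills {V : Type*} {G : SimpleGraph V} {X Y : List V} {v : V}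
    (hX : Kills G X v) (hY : Kills G Y v) (hXY : ∀ x ∈ X, x ∉ Y) (hvX : v ∉ X) (hvY : v ∉ Y) :
    IsBad G := by
  classical
  obtain ⟨M, hM, HM⟩ := hX 0
  obtain ⟨N, hN, HN⟩ := hY 1
  refine ⟨fun x => if x ∈ X then M x else if x ∈ Y then N x else {0, 1}, ?_, ?_⟩
  · intro v
    dsimp only
    split_ifs <;> simp [hM, hN]
  · intro f g hf _
    exfalso
    have h0 := HM f (fun x hx => by simpa [hx] using hf.1 x) (fun u w h => hf.2 h)
    have h1 := HN f (fun x hx => by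
      have : x ∉ X := fun h => hXY x h hx
      simpa [hx, this] using hf.1 x) (fun u w h => hf.2 h)
    have := hf.1 v
    simp [hvX, hvY] at this
    omega

/-- The other vertices of a cycle through `v` can exclude any color `c` at `v`: apply
`exists_killing_path` with both ends equal to `v`. -/
theorem kills_of_cycle {V : Type*} {G : SimpleGraph V} {R : List V} {v : V} (hnd : R.Nodup)
    (hch : (v :: R ++ [v]).IsChain G.Adj) (hR : 2 ≤ R.length) : Kills G R v := by
  intro c
  obtain ⟨M, _, hM, HM⟩ := exists_killing_path R (by rintro rfl; simp at hR) hnd v v c c (Or.inr hR)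
  refine ⟨M, hM, fun f hf hp h => ?_⟩
  exact (HM f hf (hch.imp fun x y hxy => hp x y hxy) h).2 h

/-- A path `A` from `v` to a vertex `y` on a cycle `y, B` can exclude any color `c` at `v`: if `v` has
color `c`, the lists on `A` and `y` force the color of `y` to be `c + 1`, which the cycle excludes. -/
theorem kills_of_lollipop {V : Type*} {G : SimpleGraph V} {A B : List V} {v y : V}
    (hnd : (A ++ y :: B).Nodup) (hA : (v :: A ++ [y]).IsChain G.Adj)
    (hB : (y :: B ++ [y]).IsChain G.Adj) (hB2 : 2 ≤ B.length) : Kills G (A ++ y :: B) v := by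
  classical
  intro c
  have hnd' : (A ++ [y]).Nodup := by
    simp [List.nodup_append] at hnd ⊢
    refine ⟨hnd.1, fun a ha => (hnd.2.2 a ha).1⟩
  have hBnd : B.Nodup := by
    simp [List.nodup_append] at hnd
    exact hnd.2.1.2
  have hdis : ∀ x ∈ B, x ∉ A ++ [y] := by
    simp [List.nodup_append] at hnd ⊢
    intro x hx
    exact ⟨fun ha => (hnd.2.2 x ha).2 x hx rfl, fun h => hnd.2.1.1 (h ▸ hx)⟩
  obtain ⟨M, d, hM, HM⟩ := exists_forcing_chain (A ++ [y]) (by simp) hnd' v c (c + 1)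
    (Or.inl (by omega))
  obtain ⟨N, hN, HN⟩ := kills_of_cycle hBnd hB hB2 (c + 1)
  refine ⟨fun x => if x ∈ A ++ [y] then M x else N x, ?_, ?_⟩
  · intro v
    dsimp only
    split_ifs <;> simp [hM, hN]
  · intro f hf hp h
    have h1 := (HM f (fun x hx => by
      have := hf x (by simp at hx ⊢; tauto)
      simpa only [hx, if_true] using this) (hA.imp fun x y hxy => hp x y hxy) h).2 y (by simp)
    exact HN f (fun x hx => by
      have := hf x (by simp [hx])
      simpa only [hdis x hx, if_false] using this) hp h1

/-! ### Theta graphs and ears -/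

theorem chain_reverse {V : Type*} {G : SimpleGraph V} {s t : V} {R : List V}
    (h : (s :: R ++ [t]).IsChain G.Adj) : (t :: R.reverse ++ [s]).IsChain G.Adj := by
  have := List.isChain_reverse.2 (h.imp (S := fun x y => G.Adj y x) fun x y hxy => hxy.symm)
  simpa using this

/-- Every bipartite theta graph other than `K_{2,3}` gives a 2-assignment with at most one coloring. The
two-coloring `κ` makes the numbers of interior vertices of `P`, `Q`, `R` have equal parity, so
either two of them are at least 2 or two of them equal 1 and the third is at least 3. -/
theorem isBad_of_theta {V : Type*} [Finite V] {G : SimpleGraph V} (hG : G.Connected)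
    {κ : V → ℕ} (hκ : IsProperListColoring G (fun _ => {0, 1}) κ) {s t : V} {P Q R : List V}
    (hnd : (s :: t :: (P ++ Q ++ R)).Nodup)
    (hP : (s :: P ++ [t]).IsChain G.Adj) (hQ : (s :: Q ++ [t]).IsChain G.Adj)
    (hR : (s :: R ++ [t]).IsChain G.Adj)
    (hPQ : P ≠ [] ∨ Q ≠ []) (hPR : P ≠ [] ∨ R ≠ []) (hQR : Q ≠ [] ∨ R ≠ [])
    (h1 : ¬ (P.length = 1 ∧ Q.length = 1 ∧ R.length = 1)) : IsBad G := by
  have eP := two_color_path κ t P s (fun v _ => hκ.1 v) (chain_ne hκ hP)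
  have eQ := two_color_path κ t Q s (fun v _ => hκ.1 v) (chain_ne hκ hQ)
  have eR := two_color_path κ t R s (fun v _ => hκ.1 v) (chain_ne hκ hR)
  simp only [← List.length_pos_iff] at hPQ hPR hQR
  have p1 : (s :: t :: (P ++ Q ++ R)).Perm (s :: t :: (Q ++ P ++ R)) :=
    ((List.perm_append_comm.append_right R).cons t).cons s
  have p2 : (s :: t :: (P ++ Q ++ R)).Perm (s :: t :: (R ++ P ++ Q)) := by
    rw [List.append_assoc R]
    exact (List.perm_append_comm.cons t).cons s
  have p3 : (s :: t :: (P ++ Q ++ R)).Perm (s :: t :: (Q ++ R ++ P)) := by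
    rw [List.append_assoc P]
    exact (List.perm_append_comm.cons t).cons s
  have short : ∀ {P Q R : List V}, (s :: t :: (P ++ Q ++ R)).Nodup →
      (s :: P ++ [t]).IsChain G.Adj → (s :: Q ++ [t]).IsChain G.Adj →
      (s :: R ++ [t]).IsChain G.Adj → P.length = 1 → Q.length = 1 → 2 ≤ R.length → IsBad G := by
    intro P Q R hnd hP hQ hR p q r
    obtain ⟨a, rfl⟩ := List.length_eq_one_iff.1 p
    obtain ⟨b, rfl⟩ := List.length_eq_one_iff.1 q
    simp at hP hQ
    exact isBad_of_theta_short hG hnd hP.1 hP.2 hQ.1 hQ.2 hR r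
  by_cases q2 : 2 ≤ Q.length
  · by_cases r2 : 2 ≤ R.length
    · exact isBad_of_theta_long hnd hP hQ hR q2 r2
    by_cases p2' : 2 ≤ P.length
    · exact isBad_of_theta_long (p2.nodup_iff.1 hnd) hR hP hQ p2' q2
    exact short (p2.nodup_iff.1 hnd) hR hP hQ (by omega) (by omega) q2
  · by_cases r2 : 2 ≤ R.length
    · by_cases p2' : 2 ≤ P.length
      · exact isBad_of_theta_long (p1.nodup_iff.1 hnd) hQ hP hR p2' r2
      exact short hnd hP hQ hR (by omega) (by omega) r2
    · exact short (p3.nodup_iff.1 hnd) hQ hR hP (by omega) (by omega) (by omega)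

/-- Extending a path `z, R, v` outside `S` by one vertex at a time, which the degree condition allows:
the new vertex lies in `S` and differs from `v` (an ear), or it equals `v` (a cycle through `v`), or
it lies on the path already (a lollipop at `v`), or the path gets longer. -/
theorem exists_ear_aux {V : Type*} [Fintype V] {G : SimpleGraph V}
    (hdeg : ∀ v w, G.Adj v w → ∃ w', w' ≠ w ∧ G.Adj v w') {S : Set V} {v : V} (hv : v ∈ S) :
    ∀ (n : ℕ) (z : V) (R : List V), Fintype.card V - (z :: R).length = n → (z :: R).Nodup →
    (∀ x ∈ z :: R, x ∉ S) → (z :: R ++ [v]).IsChain G.Adj →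
    (∃ (T : List V) (y : V), T ≠ [] ∧ T.Nodup ∧ (∀ x ∈ T, x ∉ S) ∧ y ∈ S ∧ y ≠ v ∧
      (y :: T ++ [v]).IsChain G.Adj) ∨
    ∃ T : List V, (∀ x ∈ T, x ∉ S) ∧ Kills G T v := by
  classical
  intro n
  induction n using Nat.strong_induction_on with
  | _ n ih =>
  intro z R hn hnd hS hch
  -- `a` is the neighbor of `z` on the path; the degree condition supplies another neighbor `b`
  obtain ⟨a, l, hal⟩ : ∃ a l, R ++ [v] = a :: l := List.exists_cons_of_ne_nil (by simp)
  have hch' := hch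
  rw [List.cons_append, hal, List.isChain_cons_cons] at hch'
  obtain ⟨b, hba, hzb⟩ := hdeg z a hch'.1
  have hch2 : (b :: z :: R ++ [v]).IsChain G.Adj := by
    rw [List.cons_append, List.cons_append, List.isChain_cons_cons]
    exact ⟨hzb.symm, hch⟩
  by_cases hbS : b ∈ S
  · by_cases hbv : b = v
    · subst hbv
      right
      refine ⟨z :: R, hS, kills_of_cycle hnd hch2 ?_⟩
      cases R with
      | nil => simp at hal; exact absurd hal.1 hba
      | cons c R => simp
    · left
      exact ⟨z :: R, b, by simp, hnd, hS, hbS, hbv, hch2⟩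
  · by_cases hbR : b ∈ R
    · right
      obtain ⟨B, A, rfl⟩ := List.append_of_mem hbR
      have hB : B ≠ [] := by
        rintro rfl
        simp at hal
        exact hba hal.1
      have hA : (b :: A ++ [v]).IsChain G.Adj := by
        have : z :: (B ++ b :: A) ++ [v] = (z :: B) ++ (b :: A ++ [v]) := by simp
        rw [this] at hch
        exact (List.isChain_append.1 hch).2.1
      have hBc : (b :: (z :: B) ++ [b]).IsChain G.Adj := by
        have : b :: z :: (B ++ b :: A) ++ [v] = (b :: (z :: B) ++ [b]) ++ (A ++ [v]) := by simp
        rw [this] at hch2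
        exact (List.isChain_append.1 hch2).1
      have hperm : (z :: (B ++ b :: A)).Perm (A.reverse ++ b :: (z :: B)) := by
        have : z :: (B ++ b :: A) = (z :: B) ++ (b :: A) := by simp
        rw [this]
        refine List.perm_append_comm.trans ?_
        rw [List.cons_append]
        refine List.perm_middle.symm.trans ?_
        exact (List.reverse_perm A).symm.append_right _
      refine ⟨A.reverse ++ b :: (z :: B), fun x hx => hS x (hperm.mem_iff.2 hx),
        kills_of_lollipop (hperm.nodup_iff.1 hnd) (chain_reverse hA) hBc ?_⟩
      have := List.length_pos_iff.2 hB
      simp only [List.length_cons]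
      omega
    · have hnd2 : (b :: z :: R).Nodup := by
        refine List.nodup_cons.2 ⟨?_, hnd⟩
        simp only [List.mem_cons, not_or]
        exact ⟨hzb.ne', hbR⟩
      refine ih _ ?_ b (z :: R) rfl hnd2 ?_ hch2
      · have := hnd2.length_le_card
        simp only [List.length_cons] at *
        omega
      · intro x hx
        rcases List.mem_cons.1 hx with rfl | hx
        · exact hbS
        · exact hS x hx

/-- If no vertex has degree 1, an edge leaving `S` at `v` is the end of an ear of `S`, given by its
interior `T` and its other end `y`, or starts a cycle or lollipop outside `S` that can exclude any
color at `v`. -/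
theorem exists_ear {V : Type*} [Fintype V] {G : SimpleGraph V}
    (hdeg : ∀ v w, G.Adj v w → ∃ w', w' ≠ w ∧ G.Adj v w') {S : Set V} {v w : V} (hv : v ∈ S)
    (hw : w ∉ S) (hvw : G.Adj v w) :
    (∃ (T : List V) (y : V), T ≠ [] ∧ T.Nodup ∧ (∀ x ∈ T, x ∉ S) ∧ y ∈ S ∧ y ≠ v ∧
      (y :: T ++ [v]).IsChain G.Adj) ∨
    ∃ T : List V, (∀ x ∈ T, x ∉ S) ∧ Kills G T v :=
  exists_ear_aux hdeg hv _ w [] rfl (by simp) (by simpa using hw) (by simpa using hvw.symm)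

/-! ### Copies of the complete bipartite graph on 2 + 3 vertices -/

/-- `s, t` and `p, q, r` are the two sides of a copy of `K_{2,3}` in `G`. -/
structure IsK23 {V : Type*} (G : SimpleGraph V) (s t p q r : V) : Prop where
  nodup : [s, t, p, q, r].Nodup
  sp : G.Adj s p
  sq : G.Adj s q
  sr : G.Adj s r
  tp : G.Adj t p
  tq : G.Adj t q
  tr : G.Adj t r

namespace IsK23
variable {V : Type*} {G : SimpleGraph V} {s t p q r : V}

theorem swap_st (h : IsK23 G s t p q r) : IsK23 G t s p q r :=
  ⟨(List.Perm.swap t s _).nodup_iff.1 h.nodup, h.tp, h.tq, h.tr, h.sp, h.sq, h.sr⟩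

theorem swap_pq (h : IsK23 G s t p q r) : IsK23 G s t q p r :=
  ⟨(((List.Perm.swap q p _).cons t).cons s).nodup_iff.1 h.nodup, h.sq, h.sp, h.sr, h.tq, h.tp, h.tr⟩

theorem swap_qr (h : IsK23 G s t p q r) : IsK23 G s t p r q :=
  ⟨((((List.Perm.swap r q _).cons p).cons t).cons s).nodup_iff.1 h.nodup,
    h.sp, h.sr, h.sq, h.tp, h.tr, h.tq⟩

theorem kills_s (h : IsK23 G s t p q r) : Kills G [p, t, q] s := by
  refine kills_of_cycle ?_ ?_ (by simp)
  · have := h.nodup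
    simp at this ⊢
    grind
  · simp [h.sp, h.tp.symm, h.tq, h.sq.symm]

theorem kills_p (h : IsK23 G s t p q r) : Kills G [s, q, t] p := by
  refine kills_of_cycle ?_ ?_ (by simp)
  · have := h.nodup
    simp at this ⊢
    grind
  · simp [h.sp.symm, h.tp, h.tq.symm, h.sq]

/-- Each vertex of a `K_{2,3}` lies on a 4-cycle inside it, which can exclude any color there. -/
theorem exists_kills (h : IsK23 G s t p q r) {v : V} (hv : v ∈ [s, t, p, q, r]) :
    ∃ X : List V, (∀ x ∈ X, x ∈ [s, t, p, q, r]) ∧ v ∉ X ∧ Kills G X v := by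
  have hnd := h.nodup
  simp only [List.mem_cons, List.not_mem_nil, or_false] at hv
  rcases hv with rfl | rfl | rfl | rfl | rfl
  · exact ⟨_, by simp, by simp at hnd ⊢; grind, h.kills_s⟩
  · exact ⟨_, by simp, by simp at hnd ⊢; grind, h.swap_st.kills_s⟩
  · exact ⟨_, by simp, by simp at hnd ⊢; grind, h.kills_p⟩
  · exact ⟨_, by simp, by simp at hnd ⊢; grind, h.swap_pq.kills_p⟩
  · exact ⟨_, by simp, by simp at hnd ⊢; grind, h.swap_qr.swap_pq.kills_p⟩

variable [Finite V] {κ : V → ℕ} {T : List V}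

/-- An ear joining the two vertices `s`, `t` of degree 3: with one interior vertex it completes a
`K_{2,4}`, otherwise it forms a theta graph with two of the three paths. -/
theorem isBad_ear_st (h : IsK23 G s t p q r) (hG : G.Connected)
    (hκ : IsProperListColoring G (fun _ => {0, 1}) κ) (hTn : T ≠ []) (hT : T.Nodup)
    (hTS : ∀ x ∈ T, x ∉ [s, t, p, q, r]) (hch : (s :: T ++ [t]).IsChain G.Adj) : IsBad G := by
  by_cases hT1 : T.length = 1
  · obtain ⟨w, rfl⟩ := List.length_eq_one_iff.1 hT1
    simp at hch
    refine isBad_of_K24 (s := s) (t := t) (p := p) (q := q) (r := r) (w := w) ?_ h.sp h.sq h.sr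
      hch.1 h.tp h.tq h.tr hch.2.symm
    have := h.nodup
    have h2 := hTS w (by simp)
    simp at this h2 ⊢
    grind
  · refine isBad_of_theta hG hκ (s := s) (t := t) (P := [p]) (Q := [q]) (R := T) ?_ ?_ ?_ hch
      (by simp) (by simp) (by simp) (by simp [hT1])
    · have := h.nodup
      simp at this hTS ⊢
      grind
    · simp [h.sp, h.tp.symm]
    · simp [h.sq, h.tq.symm]

/-- An ear joining adjacent vertices `s`, `p`: the edge `sp`, the path `s, q, t, p` and the ear form a
theta graph. -/
theorem isBad_ear_sp (h : IsK23 G s t p q r) (hG : G.Connected)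
    (hκ : IsProperListColoring G (fun _ => {0, 1}) κ) (hTn : T ≠ []) (hT : T.Nodup)
    (hTS : ∀ x ∈ T, x ∉ [s, t, p, q, r]) (hch : (s :: T ++ [p]).IsChain G.Adj) : IsBad G := by
  refine isBad_of_theta hG hκ (s := s) (t := p) (P := []) (Q := [q, t]) (R := T) ?_ ?_ ?_ hch
      (by simp) (by simp [hTn]) (by simp) (by simp)
  · have := h.nodup
    simp at this hTS ⊢
    grind
  · simp [h.sp]
  · simp [h.sq, h.tq.symm, h.tp]

/-- An ear joining `p` and `q`: the edge `sp`, the path `s, r, t, p` and the path through `q` and the ear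
form a theta graph with ends `s` and `p`. -/
theorem isBad_ear_pq (h : IsK23 G s t p q r) (hG : G.Connected)
    (hκ : IsProperListColoring G (fun _ => {0, 1}) κ) (hT : T.Nodup)
    (hTS : ∀ x ∈ T, x ∉ [s, t, p, q, r]) (hch : (p :: T ++ [q]).IsChain G.Adj) : IsBad G := by
  refine isBad_of_theta hG hκ (s := s) (t := p) (P := []) (Q := [r, t]) (R := q :: T.reverse)
      ?_ ?_ ?_ ?_ (by simp) (by simp) (by simp) (by simp)
  · have := h.nodup
    simp at this hTS ⊢
    grind
  · simp [h.sp]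
  · simp [h.sr, h.tr.symm, h.tp]
  · have := chain_reverse hch
    rw [List.cons_append, List.cons_append, List.isChain_cons_cons]
    exact ⟨h.sq, this⟩

/-- The three preceding lemmas cover all pairs of ends of an ear, up to the symmetries of `K_{2,3}`. -/
theorem isBad_ear (h : IsK23 G s t p q r) (hG : G.Connected)
    (hκ : IsProperListColoring G (fun _ => {0, 1}) κ) (hTn : T ≠ []) (hT : T.Nodup)
    (hTS : ∀ x ∈ T, x ∉ [s, t, p, q, r]) {y v : V} (hy : y ∈ [s, t, p, q, r])
    (hv : v ∈ [s, t, p, q, r]) (hyv : y ≠ v) (hch : (y :: T ++ [v]).IsChain G.Adj) : IsBad G := by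
  have hTn' : T.reverse ≠ [] := by simpa using hTn
  have hT' : T.reverse.Nodup := by simpa using hT
  have hmem : ∀ {l : List V}, (∀ x, x ∈ l ↔ x ∈ [s, t, p, q, r]) → ∀ x ∈ T, x ∉ l :=
    fun hl x hx hxl => hTS x hx ((hl x).1 hxl)
  have hmem' : ∀ {l : List V}, (∀ x, x ∈ l ↔ x ∈ [s, t, p, q, r]) → ∀ x ∈ T.reverse, x ∉ l :=
    fun hl x hx hxl => hTS x (List.mem_reverse.1 hx) ((hl x).1 hxl)
  have hch' := chain_reverse hch
  simp only [List.mem_cons, List.not_mem_nil, or_false] at hy hv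
  rcases hy with rfl | rfl | rfl | rfl | rfl <;> rcases hv with rfl | rfl | rfl | rfl | rfl
  · exact absurd rfl hyv
  · exact h.isBad_ear_st hG hκ hTn hT hTS hch
  · exact h.isBad_ear_sp hG hκ hTn hT hTS hch
  · exact h.swap_pq.isBad_ear_sp hG hκ hTn hT (hmem (by simp; tauto)) hch
  · exact h.swap_qr.swap_pq.isBad_ear_sp hG hκ hTn hT (hmem (by simp; tauto)) hch
  · exact h.isBad_ear_st hG hκ hTn' hT' (hmem' (by simp)) hch'
  · exact absurd rfl hyv
  · exact h.swap_st.isBad_ear_sp hG hκ hTn hT (hmem (by simp; tauto)) hch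
  · exact h.swap_st.swap_pq.isBad_ear_sp hG hκ hTn hT (hmem (by simp; tauto)) hch
  · exact h.swap_st.swap_qr.swap_pq.isBad_ear_sp hG hκ hTn hT (hmem (by simp; tauto)) hch
  · exact h.isBad_ear_sp hG hκ hTn' hT' (hmem' (by simp)) hch'
  · exact h.swap_st.isBad_ear_sp hG hκ hTn' hT' (hmem' (by simp; tauto)) hch'
  · exact absurd rfl hyv
  · exact h.isBad_ear_pq hG hκ hT hTS hch
  · exact h.swap_qr.isBad_ear_pq hG hκ hT (hmem (by simp; tauto)) hch
  · exact h.swap_pq.isBad_ear_sp hG hκ hTn' hT' (hmem' (by simp; tauto)) hch'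
  · exact h.swap_st.swap_pq.isBad_ear_sp hG hκ hTn' hT' (hmem' (by simp; tauto)) hch'
  · exact h.isBad_ear_pq hG hκ hT' (hmem' (by simp)) hch'
  · exact absurd rfl hyv
  · exact h.swap_pq.swap_qr.isBad_ear_pq hG hκ hT (hmem (by simp; tauto)) hch
  · exact h.swap_qr.swap_pq.isBad_ear_sp hG hκ hTn' hT' (hmem' (by simp; tauto)) hch'
  · exact h.swap_st.swap_qr.swap_pq.isBad_ear_sp hG hκ hTn' hT' (hmem' (by simp; tauto)) hch'
  · exact h.swap_qr.isBad_ear_pq hG hκ hT' (hmem' (by simp; tauto)) hch'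
  · exact h.swap_pq.swap_qr.isBad_ear_pq hG hκ hT' (hmem' (by simp; tauto)) hch'
  · exact absurd rfl hyv

/-- A connected bipartite graph without vertices of degree 1 that contains a `K_{2,3}` has no further
vertex, or a 2-assignment with at most one coloring. -/
theorem isBad_or_forall_mem {V : Type*} [Fintype V] {G : SimpleGraph V} {s t p q r : V} {κ : V → ℕ}
    (h : IsK23 G s t p q r) (hG : G.Connected)
    (hκ : IsProperListColoring G (fun _ => {0, 1}) κ)
    (hdeg : ∀ v w, G.Adj v w → ∃ w', w' ≠ w ∧ G.Adj v w') :
    IsBad G ∨ ∀ x, x ∈ [s, t, p, q, r] := by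
  by_contra! hcon
  obtain ⟨hbad, x, hx⟩ := hcon
  obtain ⟨v, hv, w, hw, hvw⟩ :=
    exists_boundary_adj hG (S := {x | x ∈ [s, t, p, q, r]}) (a := s) (b := x) (by simp) hx
  rcases exists_ear hdeg hv hw hvw with ⟨T, y, hTn, hT, hTS, hy, hyv, hch⟩ | ⟨T, hTS, hT⟩
  · exact hbad (h.isBad_ear hG hκ hTn hT hTS hy hv hyv hch)
  · obtain ⟨X, hX, hvX, hK⟩ := h.exists_kills hv
    exact hbad (isBad_of_kills hK hT (fun x hx hxT => hTS x hxT (hX x hx)) hvX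
      fun hvT => hTS v hvT hv)

/-- A bipartite graph whose vertices are those of a `K_{2,3}` has no further edges, since the
two-coloring `κ` separates the sides. -/
theorem nonempty_iso {V : Type*} {G : SimpleGraph V} {s t p q r : V} {κ : V → ℕ}
    (h : IsK23 G s t p q r) (hκ : IsProperListColoring G (fun _ => {0, 1}) κ)
    (hall : ∀ x, x ∈ [s, t, p, q, r]) :
    Nonempty (G ≃g completeBipartiteGraph (Fin 2) (Fin 3)) := by
  have hnd := h.nodup
  simp at hnd
  have hbij : Function.Bijective (Sum.elim ![s, t] ![p, q, r] : Fin 2 ⊕ Fin 3 → V) := by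
    constructor
    · rintro (i | i) (j | j) hij <;> fin_cases i <;> fin_cases j <;> simp at hij ⊢ <;> grind
    · intro x
      have := hall x
      simp at this
      rcases this with rfl | rfl | rfl | rfl | rfl
      · exact ⟨Sum.inl 0, rfl⟩
      · exact ⟨Sum.inl 1, rfl⟩
      · exact ⟨Sum.inr 0, rfl⟩
      · exact ⟨Sum.inr 1, rfl⟩
      · exact ⟨Sum.inr 2, rfl⟩
  have hc : ∀ x y, G.Adj x y → κ x + κ y = 1 := by
    intro x y hxy
    have := hκ.1 x
    have := hκ.1 y
    have := hκ.2 hxy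
    simp at *
    omega
  have h1 := hc _ _ h.sp
  have h2 := hc _ _ h.sq
  have h3 := hc _ _ h.sr
  have h4 := hc _ _ h.tp
  refine ⟨(RelIso.mk (Equiv.ofBijective _ hbij) ?_ :
    completeBipartiteGraph (Fin 2) (Fin 3) ≃g G).symm⟩
  have hs := h.sp
  have hno : ∀ x y, κ x = κ y → ¬ G.Adj x y := fun x y e hxy => hκ.2 hxy e
  rintro (i | i) (j | j)
  · simp only [Equiv.ofBijective_apply, Sum.elim_inl, completeBipartiteGraph_adj]
    simp
    apply hno
    fin_cases i <;> fin_cases j <;> simp <;> omega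
  · simp only [Equiv.ofBijective_apply, completeBipartiteGraph_adj]
    fin_cases i <;> fin_cases j <;> simp [h.sp, h.sq, h.sr, h.tp, h.tq, h.tr]
  · simp only [Equiv.ofBijective_apply, completeBipartiteGraph_adj]
    fin_cases i <;> fin_cases j <;>
      simp [h.sp.symm, h.sq.symm, h.sr.symm, h.tp.symm, h.tq.symm, h.tr.symm]
  · simp only [Equiv.ofBijective_apply, completeBipartiteGraph_adj]
    simp
    apply hno
    fin_cases i <;> fin_cases j <;> simp <;> omega

end IsK23

/-! ### Bipartite graphs of minimum degree 2 in which every 2-assignment has two colorings -/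

/-- A cycle given by the closed chain `x, l, x` may be started at any of its vertices `u`. -/
theorem cycle_rotate {V : Type*} {G : SimpleGraph V} {x u : V} {l A B : List V}
    (h : (x :: l ++ [x]).IsChain G.Adj) (hA : x :: l = A ++ u :: B) :
    (u :: (B ++ A) ++ [u]).IsChain G.Adj := by
  rw [hA] at h
  cases A with
  | nil =>
    simp at hA h ⊢
    obtain ⟨rfl, rfl⟩ := hA
    exact h
  | cons a A =>
    simp at hA
    obtain ⟨rfl, rfl⟩ := hA
    have e : (x :: A) ++ u :: B ++ [x] = (x :: A) ++ (u :: (B ++ [x])) := by simp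
    have h1 : (x :: A ++ [u]).IsChain G.Adj := by
      have e : (x :: A) ++ u :: B ++ [x] = (x :: A ++ [u]) ++ (B ++ [x]) := by simp
      rw [e] at h
      exact (List.isChain_append.1 h).1
    have h2 : (u :: (B ++ [x])).IsChain G.Adj := by
      rw [e] at h
      exact (List.isChain_append.1 h).2.1
    have e3 : u :: (B ++ x :: A) ++ [u] = (u :: B) ++ x :: (A ++ [u]) := by simp
    rw [e3, List.isChain_split]
    exact ⟨by simpa using h2, by simpa using h1⟩

/-- A cycle `x, P, y, Q` with an ear `T` (a chord if `T` is empty) joining `x` and `y` is a theta graph,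
so it is a `K_{2,3}` or yields a 2-assignment with at most one coloring. -/
theorem cycle_ear {V : Type*} [Finite V] {G : SimpleGraph V} (hG : G.Connected)
    {κ : V → ℕ} (hκ : IsProperListColoring G (fun _ => {0, 1}) κ) {x y : V} {P Q T : List V}
    (hnd : (x :: (P ++ y :: Q)).Nodup) (hc : (x :: (P ++ y :: Q) ++ [x]).IsChain G.Adj)
    (hTn : T.Nodup) (hTd : ∀ z ∈ T, z ∉ x :: (P ++ y :: Q)) (hT : (x :: T ++ [y]).IsChain G.Adj)
    (hPQ : P ≠ [] ∨ Q ≠ []) (hPT : P ≠ [] ∨ T ≠ []) (hQT : Q ≠ [] ∨ T ≠ []) :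
    IsBad G ∨ ∃ s t p q r, IsK23 G s t p q r := by
  have hP : (x :: P ++ [y]).IsChain G.Adj := by
    have e : x :: (P ++ y :: Q) ++ [x] = (x :: P ++ [y]) ++ (Q ++ [x]) := by simp
    rw [e] at hc
    exact (List.isChain_append.1 hc).1
  have hQ : (y :: Q ++ [x]).IsChain G.Adj := by
    have e : x :: (P ++ y :: Q) ++ [x] = (x :: P) ++ (y :: Q ++ [x]) := by simp
    rw [e] at hc
    exact (List.isChain_append.1 hc).2.1
  have hQ' := chain_reverse hQ
  have hnd' : (x :: y :: (P ++ Q.reverse ++ T)).Nodup := by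
    simp [List.nodup_append] at hnd hTd ⊢
    grind
  by_cases h1 : P.length = 1 ∧ Q.length = 1 ∧ T.length = 1
  · right
    obtain ⟨hP1, hQ1, hT1⟩ := h1
    obtain ⟨p, rfl⟩ := List.length_eq_one_iff.1 hP1
    obtain ⟨q, rfl⟩ := List.length_eq_one_iff.1 hQ1
    obtain ⟨r, rfl⟩ := List.length_eq_one_iff.1 hT1
    simp at hP hQ' hT
    exact ⟨x, y, p, q, r, by simpa using hnd', hP.1, hQ'.1, hT.1, hP.2.symm, hQ'.2.symm, hT.2.symm⟩
  · left
    exact isBad_of_theta hG hκ hnd' hP hQ' hT (by simpa using hPQ) hPT (by simpa using hQT)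
      (by simpa using h1)

/-- A finite tree with at least two vertices has a leaf, so the degree condition gives a cycle. -/
theorem exists_cycle {V : Type*} [Fintype V] [Nontrivial V] {G : SimpleGraph V}
    (hG : G.Connected) (hdeg : ∀ v w, G.Adj v w → ∃ w', w' ≠ w ∧ G.Adj v w') :
    ∃ (x : V) (l : List V), (x :: l).Nodup ∧ (x :: l ++ [x]).IsChain G.Adj ∧ 2 ≤ l.length := by
  classical
  have hac : ¬ G.IsAcyclic := by
    intro hac
    obtain ⟨u, _, _, hu, _⟩ :=
      SimpleGraph.IsTree.exists_ne_and_degree_eq_one (G := G) ⟨hG, hac⟩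
    rw [SimpleGraph.degree_eq_one_iff_existsUnique_adj] at hu
    obtain ⟨w, hw, huni⟩ := hu
    obtain ⟨w', hne, hw'⟩ := hdeg u w hw
    exact hne (huni w' hw')
  simp only [SimpleGraph.IsAcyclic, not_forall, not_not] at hac
  obtain ⟨x, c, hc⟩ := hac
  have hlen := hc.three_le_length
  have hsupp : c.support = x :: c.support.tail := c.cons_tail_support.symm
  have hne : c.support.tail ≠ [] := by
    rw [← List.length_pos_iff]; simp; omega
  have hlast : c.support.tail = c.support.tail.dropLast ++ [x] := by
    have := List.dropLast_append_getLast hne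
    rw [List.getLast_tail, c.getLast_support] at this
    exact this.symm
  refine ⟨x, c.support.tail.dropLast, ?_, ?_, ?_⟩
  · have := hc.support_nodup
    rw [hlast] at this
    exact (List.perm_append_singleton x _).nodup_iff.1 this
  · rw [List.cons_append, ← hlast, ← hsupp]
    exact c.isChain_adj_support
  · simp
    omega

/-- A connected bipartite graph without vertices of degree 1 is `K₁`, an even cycle or `K_{2,3}`, unless
it has a 2-assignment with at most one coloring. If it contains a `K_{2,3}`, this is
`isBad_or_forall_mem`. Otherwise it contains a cycle, which can have no ear, hence passes through
every vertex, and has no chord. -/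
theorem core_structure {V : Type*} [Fintype V] {G : SimpleGraph V} (hG : G.Connected)
    {κ : V → ℕ} (hκ : IsProperListColoring G (fun _ => {0, 1}) κ)
    (hdeg : ∀ v w, G.Adj v w → ∃ w', w' ≠ w ∧ G.Adj v w') :
    IsBad G ∨ Nonempty (G ≃g (⊤ : SimpleGraph (Fin 1))) ∨
       (∃ k : ℕ, 1 ≤ k ∧ Nonempty (G ≃g SimpleGraph.cycleGraph (2*k+2))) ∨
       Nonempty (G ≃g completeBipartiteGraph (Fin 2) (Fin 3)) := by
  classical
  rw [or_iff_not_imp_left]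
  intro hbad
  by_cases hK : ∃ s t p q r, IsK23 G s t p q r
  · obtain ⟨s, t, p, q, r, h⟩ := hK
    rcases h.isBad_or_forall_mem hG hκ hdeg with hb | hall
    · exact absurd hb hbad
    · exact Or.inr (Or.inr (h.nonempty_iso hκ hall))
  rcases subsingleton_or_nontrivial V with hV | hV
  · left
    obtain ⟨v⟩ := hG.nonempty
    have : Unique V := ⟨⟨v⟩, fun x => Subsingleton.elim _ _⟩
    refine ⟨RelIso.mk (Equiv.ofUnique V (Fin 1)) ?_⟩
    intro a b
    obtain rfl := Subsingleton.elim a b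
    simp
  right; left
  obtain ⟨x, l, hnd, hch, hl⟩ := exists_cycle hG hdeg
  have hno : ∀ {x y : V} {P Q T : List V}, (x :: (P ++ y :: Q)).Nodup →
      (x :: (P ++ y :: Q) ++ [x]).IsChain G.Adj → T.Nodup →
      (∀ z ∈ T, z ∉ x :: (P ++ y :: Q)) → (x :: T ++ [y]).IsChain G.Adj →
      (P ≠ [] ∨ Q ≠ []) → (P ≠ [] ∨ T ≠ []) → ¬ (Q ≠ [] ∨ T ≠ []) := by
    intro x y P Q T h1 h2 h3 h4 h5 h6 h7 h8
    exact (cycle_ear hG hκ h1 h2 h3 h4 h5 h6 h7 h8).elim hbad hK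
  have hperm : ∀ {A B : List V} {u : V}, x :: l = A ++ u :: B →
      (x :: l).Perm (u :: (B ++ A)) := by
    intro A B u h
    rw [h]
    exact List.perm_append_comm
  -- a vertex off the cycle would give an ear, or a second way to exclude colors at a cycle vertex
  have hall : ∀ y, y ∈ x :: l := by
    by_contra! hcon
    obtain ⟨y, hy⟩ := hcon
    obtain ⟨v, hv, w, hw, hvw⟩ :=
      exists_boundary_adj hG (S := {z | z ∈ x :: l}) (a := x) (b := y) (by simp) hy
    obtain ⟨A, B, hAB⟩ := List.append_of_mem hv
    have hp := hperm hAB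
    have hrot := cycle_rotate hch hAB
    have hnd' := hp.nodup_iff.1 hnd
    have hlen : 2 ≤ (B ++ A).length := by
      have := hp.length_eq
      simp only [List.length_cons] at this
      omega
    rcases exists_ear hdeg hv hw hvw with ⟨T, y, hTn, hT, hTS, hy, hyv, hc⟩ | ⟨T, hTS, hT⟩
    · have hy' : y ∈ B ++ A := by
        have := hp.mem_iff.1 hy
        exact (List.mem_cons.1 this).resolve_left hyv
      obtain ⟨P, Q, hPQ⟩ := List.append_of_mem hy'
      rw [hPQ] at hrot hnd' hlen
      have hTn' : T.reverse ≠ [] := by simpa using hTn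
      refine hno (T := T.reverse) hnd' hrot (by simpa using hT) ?_ (chain_reverse hc) ?_
        (Or.inr hTn') (Or.inr hTn')
      · intro z hz hz'
        rw [← hPQ] at hz'
        exact hTS z (List.mem_reverse.1 hz) (hp.mem_iff.2 hz')
      · by_contra! h
        obtain ⟨rfl, rfl⟩ := h
        simp at hlen
    · refine hbad (isBad_of_kills (kills_of_cycle (List.nodup_cons.1 hnd').2 hrot hlen) hT ?_
        (List.nodup_cons.1 hnd').1 fun hvT => hTS v hvT hv)
      intro z hz hzT
      exact hTS z hzT (hp.mem_iff.2 (List.mem_cons_of_mem _ hz))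
  set n := (x :: l).length with hn
  have hn' : n = l.length + 1 := by simp [hn]
  have hpar := two_color_path κ x l x (fun v _ => hκ.1 v) (chain_ne hκ hch)
  -- the cycle has no chord
  have hadj : ∀ (i j : ℕ) (hi : i < n) (hj : j < n), i < j →
      (G.Adj (x :: l)[i] (x :: l)[j] ↔ j = i + 1 ∨ (i = 0 ∧ j = l.length)) := by
    intro i j hi hj hij
    constructor
    · intro hA
      by_contra! hcon
      obtain ⟨h1, h2⟩ := hcon
      have e1 : x :: l = (x :: l).take i ++ (x :: l)[i] :: (x :: l).drop (i + 1) := by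
        rw [List.getElem_cons_drop, List.take_append_drop]
      have e2 : (x :: l).drop (i + 1) = ((x :: l).drop (i + 1)).take (j - i - 1) ++
          (x :: l)[j] :: (x :: l).drop (j + 1) := by
        have : (x :: l)[j] :: (x :: l).drop (j + 1) = ((x :: l).drop (i + 1)).drop (j - i - 1) := by
          rw [List.getElem_cons_drop, List.drop_drop]
          congr 1; omega
        rw [this, List.take_append_drop]
      have hp := hperm e1
      have hrot := cycle_rotate hch e1
      have hnd' := hp.nodup_iff.1 hnd
      rw [e2, List.append_assoc, List.cons_append] at hrot hnd'
      have hP : ((x :: l).drop (i + 1)).take (j - i - 1) ≠ [] := by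
        rw [← List.length_pos_iff]
        simp
        omega
      have hQ : (x :: l).drop (j + 1) ++ (x :: l).take i ≠ [] := by
        rw [← List.length_pos_iff]
        simp
        omega
      exact hno (T := []) hnd' hrot (by simp) (by simp) (by simpa using hA) (Or.inl hP) (Or.inl hP)
        (Or.inl hQ)
    · have hget := List.isChain_iff_getElem.1 hch
      rintro (rfl | ⟨rfl, rfl⟩)
      · have := hget i (by simp; omega)
        rw [List.getElem_append_left (by simpa using by omega),
          List.getElem_append_left (by simpa using by omega)] at this
        exact this
      · have := hget l.length (by simp)
        rw [List.getElem_append_left (by simp),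
          List.getElem_append_right (by simp)] at this
        simpa using this.symm
  have hiso : Nonempty (G ≃g SimpleGraph.cycleGraph n) := by
    refine ⟨(RelIso.mk (List.Nodup.getEquivOfForallMemList (x :: l) hnd hall) ?_ :
      SimpleGraph.cycleGraph n ≃g G).symm⟩
    intro i j
    have key : ∀ i j : Fin n, i < j → (G.Adj (x :: l)[i.1] (x :: l)[j.1] ↔
        (SimpleGraph.cycleGraph n).Adj i j) := by
      intro i j hij
      rw [hadj i j i.2 j.2 hij, SimpleGraph.cycleGraph_adj']
      have h1 := Fin.sub_val_of_le hij.le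
      have h2 : (i - j).val = n - (j.1 - i.1) := by
        have : i.1 < j.1 := hij
        rw [Fin.coe_sub_iff_lt.2 hij]
        omega
      have := i.2
      have := j.2
      have : i.1 < j.1 := hij
      rw [h1, h2]
      omega
    rcases lt_trichotomy i j with h | rfl | h
    · exact key i j h
    · simp
    · rw [SimpleGraph.adj_comm, SimpleGraph.adj_comm (SimpleGraph.cycleGraph n)]
      exact key j i h
  obtain ⟨k, hk⟩ : ∃ k, n = 2 * k + 2 := ⟨n / 2 - 1, by omega⟩
  rw [hk] at hiso
  exact ⟨k, by omega, hiso⟩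

/-! ### The core and the necessity of the condition -/

/-- Deleting vertices of degree 1 from a connected induced subgraph keeps it connected and ends at a
subgraph without such vertices. -/
theorem exists_core {V : Type*} [Finite V] {G : SimpleGraph V} (S : Set V)
    (hS : (G.induce S).Connected) :
    ∃ T : Set V, Relation.ReflTransGen (DelStep G) S T ∧ (G.induce T).Connected ∧
      ∀ v ∈ T, {w ∈ T | G.Adj v w}.ncard ≠ 1 := by
  classical
  induction hn : S.ncard using Nat.strong_induction_on generalizing S with
  | _ n ih =>
    by_cases h : ∀ v ∈ S, {w ∈ S | G.Adj v w}.ncard ≠ 1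
    · exact ⟨S, .refl, hS, h⟩
    push Not at h
    obtain ⟨v, hv, h1⟩ := h
    obtain ⟨u, hu⟩ := Set.ncard_eq_one.1 h1
    have : Fintype V := Fintype.ofFinite V
    have hdeg : (G.induce S).degree ⟨v, hv⟩ = 1 := by
      rw [SimpleGraph.degree_eq_one_iff_existsUnique_adj]
      have huu : u ∈ {w ∈ S | G.Adj v w} := hu ▸ rfl
      refine ⟨⟨u, huu.1⟩, huu.2, ?_⟩
      rintro ⟨w, hw⟩ hvw
      have : w ∈ {w ∈ S | G.Adj v w} := ⟨hw, hvw⟩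
      rw [hu] at this
      exact Subtype.ext this
    have hc := hS.induce_compl_singleton_of_degree_eq_one hdeg
    have hc' : (G.induce (S \ {v})).Connected := by
      let φ : ((G.induce S).induce {(⟨v, hv⟩ : S)}ᶜ) ≃g G.induce (S \ {v}) :=
        { toFun := fun x => ⟨x.1.1, x.1.2, fun h => x.2 (Subtype.ext h)⟩
          invFun := fun x => ⟨⟨x.1, x.2.1⟩, fun h => x.2.2 (congrArg Subtype.val h)⟩
          left_inv := fun _ => rfl
          right_inv := fun _ => rfl
          map_rel_iff' := Iff.rfl }
      exact φ.connected_iff.1 hc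
    obtain ⟨T, hT, h2, h3⟩ := ih (S \ {v}).ncard (by
      rw [← hn]; exact Set.ncard_sdiff_singleton_lt_of_mem hv) (S \ {v}) hc' rfl
    exact ⟨T, hT.head ⟨v, hv, rfl, h1⟩, h2, h3⟩

theorem finite_subtype_choice {V : Type*} [Finite V] (L : V → Finset ℕ) (P : (V → ℕ) → Prop) :
    Finite {f : V → ℕ // (∀ v, f v ∈ L v) ∧ P f} := by
  have : Finite ((v : V) → L v) := inferInstance
  exact Finite.of_injective (fun f (v : V) => (⟨f.1 v, f.2.1 v⟩ : L v)) (by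
    intro f g h
    apply Subtype.ext
    funext v
    exact congrArg Subtype.val (congrFun h v))

theorem finite_colorings {V : Type*} [Finite V] (G : SimpleGraph V) (L : V → Finset ℕ) :
    Finite {f : V → ℕ // IsProperListColoring G L f} :=
  finite_subtype_choice L _

/-- A 2-colorable nonempty graph has at least two colorings from the constant list `{1, 2}`: one coloring
and the one with the two colors exchanged. -/
theorem not_isBad_of_eq {V : Type*} [Finite V] {G : SimpleGraph V} (hG : G.Connected)
    (hcol : G.Colorable 2) (h : listColorFn G 2 = chromPoly G 2) : ¬ IsBad G := by
  rintro ⟨L, hL, hf⟩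
  have h1 : listColorFn G 2 ≤ numListColorings G L := Nat.sInf_le ⟨L, hL, rfl⟩
  have h2 : numListColorings G L ≤ 1 := by
    have := finite_colorings G L
    refine Finite.card_le_one_iff_subsingleton.2 ⟨fun f g => Subtype.ext (hf _ _ f.2 g.2)⟩
  have h3 : 2 ≤ chromPoly G 2 := by
    obtain ⟨c⟩ := hcol
    have := finite_colorings G (fun _ => Finset.Icc 1 2)
    rw [chromPoly, numListColorings]
    have hc : ∀ u w, G.Adj u w → (c u).1 ≠ (c w).1 := fun u w h e => c.valid h (Fin.ext e)
    have := fun v => (c v).2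
    obtain ⟨v⟩ := hG.nonempty
    refine Finite.one_lt_card_iff_nontrivial.2 ⟨⟨fun v => (c v).1 + 1, ?_, ?_⟩,
      ⟨fun v => 2 - (c v).1, ?_, ?_⟩, ?_⟩
    · intro v; rw [Finset.mem_Icc]; grind
    · intro u w h; grind
    · intro v; rw [Finset.mem_Icc]; grind
    · intro u w h; grind
    · intro e
      have := congrFun (congrArg Subtype.val e) v
      simp at this
      grind
  omega

/-- The necessity of the condition; only equality at 2 is used. -/
theorem core_of_eq {V : Type*} [Finite V] {G : SimpleGraph V} (hG : G.Connected)
    (hcol : G.Colorable 2) (h : listColorFn G 2 = chromPoly G 2) :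
    ∃ S : Set V,
      Relation.ReflTransGen (DelStep G) Set.univ S ∧
      (∀ v ∈ S, {w ∈ S | G.Adj v w}.ncard ≠ 1) ∧
      (Nonempty (G.induce S ≃g (⊤ : SimpleGraph (Fin 1))) ∨
       (∃ k : ℕ, 1 ≤ k ∧ Nonempty (G.induce S ≃g SimpleGraph.cycleGraph (2*k+2))) ∨
       Nonempty (G.induce S ≃g completeBipartiteGraph (Fin 2) (Fin 3))) := by
  have hbad := not_isBad_of_eq hG hcol h
  obtain ⟨S, h1, h2, h3⟩ := exists_core (G := G) Set.univ
    ((SimpleGraph.induceUnivIso G).connected_iff.2 hG)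
  refine ⟨S, h1, h3, ?_⟩
  obtain ⟨c⟩ := hcol
  have : Fintype S := Fintype.ofFinite S
  have hne : S.Nonempty := by
    obtain ⟨x⟩ := h2.nonempty
    exact ⟨x.1, x.2⟩
  have hκ : IsProperListColoring (G.induce S) (fun _ => {0, 1}) (fun v => (c v.1).1) := by
    refine ⟨fun v => ?_, fun u w h e => c.valid h (Fin.ext e)⟩
    have := (c v.1).2
    simp
    omega
  refine (core_structure h2 hκ ?_).resolve_left fun hb => hbad (isBad_of_induce hG hne hb)
  rintro ⟨v, hv⟩ ⟨w, hw⟩ hvw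
  by_contra! hcon
  refine h3 v hv (Set.ncard_eq_one.2 ⟨w, ?_⟩)
  ext z
  simp only [Set.mem_ofPred_eq, Set.mem_singleton_iff]
  constructor
  · rintro ⟨hz, hvz⟩
    by_contra hzw
    exact hcon ⟨z, hz⟩ (fun e => hzw (congrArg Subtype.val e)) hvz
  · rintro rfl
    exact ⟨hw, hvw⟩

/-! ### Leaves and the single vertex -/

/-- No `m`-assignment with `m ≥ 2` admits fewer proper colorings than the constant one. -/
def IsGood {V : Type*} (G : SimpleGraph V) : Prop :=
  ∀ m : ℕ, 2 ≤ m → ∀ L : V → Finset ℕ, (∀ v, (L v).card = m) →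
    chromPoly G m ≤ numListColorings G L

theorem IsGood.listColorFn_eq {V : Type*} {G : SimpleGraph V} (h : IsGood G) {m : ℕ}
    (hm : 2 ≤ m) : listColorFn G m = chromPoly G m := by
  have hmem : chromPoly G m ∈ {n | ∃ L : V → Finset ℕ, (∀ v, (L v).card = m) ∧
      numListColorings G L = n} := ⟨fun _ => Finset.Icc 1 m, by simp, rfl⟩
  refine le_antisymm (Nat.sInf_le hmem) (le_csInf ⟨_, hmem⟩ ?_)
  rintro _ ⟨L, hL, rfl⟩
  exact h m hm L hL

/-- The number of list colorings is invariant under isomorphisms that transport the lists. -/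
theorem numListColorings_iso {V W : Type*} {G : SimpleGraph V} {H : SimpleGraph W} (φ : G ≃g H)
    (L : V → Finset ℕ) : numListColorings G L = numListColorings H (fun w => L (φ.symm w)) := by
  refine Nat.card_congr ⟨fun f => ⟨fun w => f.1 (φ.symm w), fun w => f.2.1 _, fun u w h =>
    f.2.2 (φ.symm.map_rel_iff.2 h)⟩, fun f => ⟨fun v => f.1 (φ v), fun v => ?_, fun u w h =>
    f.2.2 (φ.map_rel_iff.2 h)⟩, fun f => ?_, fun f => ?_⟩
  · simpa using f.2.1 (φ v)
  · apply Subtype.ext; funext v; simp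
  · apply Subtype.ext; funext v; simp

theorem IsGood.of_iso {V W : Type*} {G : SimpleGraph V} {H : SimpleGraph W} (h : IsGood H)
    (φ : G ≃g H) : IsGood G := by
  intro m hm L hL
  rw [chromPoly, numListColorings_iso φ, numListColorings_iso φ]
  exact h m hm _ (fun w => hL _)

/-- If `u` is the only neighbor of `v` in `S`, each coloring `g` of `S \ {v}` extends to `v` by any color
of its list other than `g u`. -/
theorem leaf_count {V : Type*} {G : SimpleGraph V} {S : Set V} {v u : V}
    (hv : v ∈ S) (hu : u ∈ S \ {v}) (huv : ∀ w ∈ S, G.Adj v w ↔ w = u) (L : S → Finset ℕ)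
    [Fintype {g // IsProperListColoring (G.induce (S \ {v})) (fun x => L ⟨x, x.2.1⟩) g}] :
    numListColorings (G.induce S) L =
      ∑ g : {g // IsProperListColoring (G.induce (S \ {v})) (fun x => L ⟨x, x.2.1⟩) g},
        ((L ⟨v, hv⟩).erase (g.1 ⟨u, hu⟩)).card := by
  classical
  have e : {f // IsProperListColoring (G.induce S) L f} ≃
      Σ g : {g // IsProperListColoring (G.induce (S \ {v})) (fun x => L ⟨x, x.2.1⟩) g},
        {c // c ∈ (L ⟨v, hv⟩).erase (g.1 ⟨u, hu⟩)} := by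
    refine ⟨fun f => ⟨⟨fun x => f.1 ⟨x, x.2.1⟩, fun x => f.2.1 _, fun x y h => f.2.2 h⟩,
      ⟨f.1 ⟨v, hv⟩, Finset.mem_erase.2 ⟨f.2.2 ?_, f.2.1 _⟩⟩⟩,
      fun p => ⟨fun x => if h : x.1 = v then p.2.1 else p.1.1 ⟨x, x.2, h⟩, ?_, ?_⟩, ?_, ?_⟩
    · exact (huv u hu.1).2 rfl
    · rintro ⟨x, hx⟩
      by_cases h : x = v
      · subst h; simpa using (Finset.mem_erase.1 p.2.2).2
      · simpa [h] using p.1.2.1 ⟨x, hx, h⟩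
    · rintro ⟨x, hx⟩ ⟨y, hy⟩ hxy
      have hxy : G.Adj x y := hxy
      have hp := (Finset.mem_erase.1 p.2.2).1
      by_cases h : x = v
      · subst h
        have := (huv y hy).1 hxy
        subst this
        simpa [hxy.ne'] using hp
      · by_cases h' : y = v
        · subst h'
          have := (huv x hx).1 hxy.symm
          subst this
          simpa [hxy.ne] using hp.symm
        · simpa [h, h'] using p.1.2.2 (show (G.induce (S \ {v})).Adj ⟨x, hx, h⟩ ⟨y, hy, h'⟩ from hxy)
    · intro f
      apply Subtype.ext
      funext x
      by_cases h : x.1 = v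
      · obtain ⟨x, hx⟩ := x
        simp only at h
        subst h; simp
      · simp [h]
    · rintro ⟨⟨g, hg⟩, ⟨c, hc⟩⟩
      refine Sigma.subtype_ext (Subtype.ext ?_) ?_
      · funext x
        exact dif_neg x.2.2
      · exact dif_pos rfl
  rw [numListColorings, Nat.card_congr e, Nat.card_sigma]
  refine Finset.sum_congr rfl fun g _ => ?_
  rw [Nat.card_eq_fintype_card, Fintype.card_coe]

/-- Adding a vertex of degree 1 multiplies the number of colorings from constant lists by exactly
`m - 1`, and the number of colorings from arbitrary lists of size `m` by at least `m - 1`. -/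
theorem IsGood.of_delStep {V : Type*} [Finite V] {G : SimpleGraph V} {S T : Set V}
    (h : IsGood (G.induce T)) (hST : DelStep G S T) : IsGood (G.induce S) := by
  obtain ⟨v, hv, rfl, h1⟩ := hST
  obtain ⟨u, hu⟩ := Set.ncard_eq_one.1 h1
  have huv : ∀ w ∈ S, G.Adj v w ↔ w = u := fun w hw => by
    have := Set.ext_iff.1 hu w
    simpa [hw] using this
  have huS : u ∈ {w ∈ S | G.Adj v w} := hu ▸ rfl
  have huS' : u ∈ S \ {v} := ⟨huS.1, huS.2.ne'⟩
  intro m hm L hL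
  have := finite_colorings (G.induce (S \ {v})) (fun x => L ⟨x, x.2.1⟩)
  have := finite_colorings (G.induce (S \ {v})) (fun _ => Finset.Icc 1 m)
  let _ := Fintype.ofFinite
    {g // IsProperListColoring (G.induce (S \ {v})) (fun x => L ⟨x, x.2.1⟩) g}
  let _ := Fintype.ofFinite
    {g // IsProperListColoring (G.induce (S \ {v})) (fun _ => Finset.Icc 1 m) g}
  calc chromPoly (G.induce S) m = chromPoly (G.induce (S \ {v})) m * (m - 1) := by
        rw [chromPoly, leaf_count hv huS' huv, Finset.sum_congr rfl
          (g := fun _ => m - 1) (fun g _ => ?_)]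
        · simp [chromPoly, numListColorings]
        · rw [Finset.card_erase_of_mem (g.2.1 _)]
          simp
    _ ≤ numListColorings (G.induce (S \ {v})) (fun x => L ⟨x, x.2.1⟩) * (m - 1) :=
        Nat.mul_le_mul_right _ (h m hm _ fun _ => hL _)
    _ ≤ numListColorings (G.induce S) L := by
        rw [leaf_count hv huS' huv L, numListColorings, Nat.card_eq_fintype_card,
          ← smul_eq_mul, ← Finset.card_univ]
        refine Finset.card_nsmul_le_sum _ _ _ fun g _ => ?_
        rw [← hL ⟨v, hv⟩]
        exact Finset.pred_card_le_card_erase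

theorem IsGood.of_core {V : Type*} [Finite V] {G : SimpleGraph V} {S T : Set V}
    (h : IsGood (G.induce T)) (hST : Relation.ReflTransGen (DelStep G) S T) :
    IsGood (G.induce S) := by
  induction hST using Relation.ReflTransGen.head_induction_on with
  | refl => exact h
  | head h1 _ ih => exact ih.of_delStep h1

theorem isGood_top_one : IsGood (⊤ : SimpleGraph (Fin 1)) := by
  have key : ∀ L : Fin 1 → Finset ℕ, numListColorings (⊤ : SimpleGraph (Fin 1)) L =
      (L 0).card := by
    intro L
    rw [numListColorings, ← Fintype.card_coe, ← Nat.card_eq_fintype_card]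
    refine Nat.card_congr ⟨fun f => ⟨f.1 0, f.2.1 0⟩, fun c => ⟨fun _ => c.1, fun v => ?_,
      fun u w h => ?_⟩, fun f => ?_, fun c => rfl⟩
    · rw [Subsingleton.elim v 0]; exact c.2
    · exact absurd (Subsingleton.elim u w) h.ne
    · apply Subtype.ext; funext v; rw [Subsingleton.elim v 0]
  intro m _ L hL
  rw [chromPoly, key, key, hL]
  simp

/-! ### Counting colorings of paths with prescribed ends -/

/-- The number of ways to choose `x₁ ∈ l₁, …, xᵣ ∈ lᵣ` so that consecutive entries of
`a, x₁, …, xᵣ, b` differ, where `[l₁, …, lᵣ]` is the list argument. -/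
def pathCount : ℕ → List (Finset ℕ) → ℕ → ℕ
  | a, [], b => if a = b then 0 else 1
  | a, l :: ls, b => ∑ x ∈ l.erase a, pathCount x ls b

/-- `pathCount` is the number of choice functions it is meant to count. -/
theorem pathCount_eq_card {n : ℕ} (L : Fin n → Finset ℕ) (a b : ℕ) :
    Nat.card {f : Fin n → ℕ // (∀ i, f i ∈ L i) ∧ (a :: List.ofFn f ++ [b]).IsChain (· ≠ ·)} =
      pathCount a (List.ofFn L) b := by
  induction n generalizing a with
  | zero =>
    by_cases h : a = b
    · have : IsEmpty {f : Fin 0 → ℕ // (∀ i, f i ∈ L i) ∧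
          (a :: List.ofFn f ++ [b]).IsChain (· ≠ ·)} := ⟨fun f => by
        have := f.2.2
        simp [h] at this⟩
      simp [pathCount, h]
    · rw [List.ofFn_zero, pathCount, if_neg h, Nat.card_eq_one_iff_exists]
      exact ⟨⟨Fin.elim0, fun i => i.elim0, by simpa using h⟩, fun f => Subtype.ext
        (Subsingleton.elim _ _)⟩
  | succ n ih =>
    have e : {f : Fin (n + 1) → ℕ // (∀ i, f i ∈ L i) ∧
          (a :: List.ofFn f ++ [b]).IsChain (· ≠ ·)} ≃
        Σ x : {x // x ∈ (L 0).erase a}, {f : Fin n → ℕ // (∀ i, f i ∈ L i.succ) ∧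
          (x.1 :: List.ofFn f ++ [b]).IsChain (· ≠ ·)} := by
      refine ⟨fun f => ⟨⟨f.1 0, ?_⟩, ⟨fun i => f.1 i.succ, fun i => f.2.1 _, ?_⟩⟩,
        fun p => ⟨Fin.cons p.1.1 p.2.1, ?_, ?_⟩, ?_, ?_⟩
      · have h := f.2.2
        rw [List.ofFn_succ, List.cons_append, List.cons_append, List.isChain_cons_cons] at h
        exact Finset.mem_erase.2 ⟨h.1.symm, f.2.1 0⟩
      · have h := f.2.2
        rw [List.ofFn_succ, List.cons_append, List.cons_append, List.isChain_cons_cons] at h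
        exact h.2
      · intro i
        cases i using Fin.cases with
        | zero => exact (Finset.mem_erase.1 p.1.2).2
        | succ i => exact p.2.2.1 i
      · rw [List.ofFn_succ, List.cons_append, List.cons_append, List.isChain_cons_cons]
        exact ⟨(Finset.mem_erase.1 p.1.2).1.symm, by simpa using p.2.2.2⟩
      · intro f
        exact Subtype.ext (Fin.cons_self_tail f.1)
      · rintro ⟨⟨x, hx⟩, ⟨f, hf⟩⟩
        refine Sigma.ext rfl (heq_of_eq (Subtype.ext ?_))
        funext i
        simp
    have := fun x : {x // x ∈ (L 0).erase a} => finite_subtype_choice (fun i : Fin n => L i.succ)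
      fun f => (x.1 :: List.ofFn f ++ [b]).IsChain (· ≠ ·)
    rw [Nat.card_congr e, Nat.card_sigma, List.ofFn_succ, pathCount]
    exact (Finset.sum_congr rfl fun x _ => ih _ _).trans
      (Finset.sum_coe_sort ((L 0).erase a) fun x => pathCount x _ b)

/-- Cutting a cycle at the vertex `0`: a coloring is a color `a` there and a coloring of the remaining
path whose ends are compatible with `a`. -/
theorem numListColorings_cycleGraph {n : ℕ} (hn : 2 ≤ n) (L : Fin (n + 1) → Finset ℕ) :
    numListColorings (SimpleGraph.cycleGraph (n + 1)) L =
      ∑ a ∈ L 0, pathCount a (List.ofFn fun i : Fin n => L i.succ) a := by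
  have hprop : ∀ f : Fin (n + 1) → ℕ, (∀ ⦃u w⦄, (SimpleGraph.cycleGraph (n + 1)).Adj u w →
      f u ≠ f w) ↔ (f 0 :: List.ofFn (fun i : Fin n => f i.succ) ++ [f 0]).IsChain (· ≠ ·) := by
    intro f
    rw [← List.ofFn_succ (f := f), List.isChain_append, List.isChain_ofFn]
    simp only [List.isChain_singleton, true_and, SimpleGraph.cycleGraph_adj']
    have hlast : (List.ofFn f).getLast? = some (f (Fin.last n)) := by
      rw [List.getLast?_eq_getElem?]
      simp only [List.length_ofFn, Nat.add_sub_cancel, List.getElem?_ofFn]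
      simp [Fin.last]
    rw [hlast]
    simp only [Option.mem_def, Option.some.injEq, forall_eq', List.head?_cons]
    have hsub : ∀ i j : Fin (n + 1), i < j → (((i - j).val = 1 ∨ (j - i).val = 1) ↔
        (j.1 = i.1 + 1 ∨ (i.1 = 0 ∧ j.1 = n))) := by
      intro i j hij
      rw [Fin.coe_sub_iff_lt.2 hij, Fin.sub_val_of_le hij.le]
      have : i.1 < j.1 := hij
      have := j.2
      omega
    constructor
    · intro h
      refine ⟨fun i hi => h ((hsub ⟨i, _⟩ ⟨i + 1, _⟩ (by simp)).2 (Or.inl rfl)), ?_⟩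
      exact (h ((hsub 0 (Fin.last n) (Fin.lt_def.2 (by simp; omega))).2 (Or.inr ⟨rfl, rfl⟩))).symm
    · rintro ⟨h1, h2⟩ 
      have key : ∀ i j : Fin (n + 1), i < j → ((i - j).val = 1 ∨ (j - i).val = 1) →
          f i ≠ f j := by
        intro i j hij h
        rcases (hsub i j hij).1 h with h | ⟨h, h'⟩
        · have hj := j.2
          have := h1 i.1 (by omega)
          have e : j = ⟨i.1 + 1, by omega⟩ := Fin.ext h
          rw [e]
          exact this
        · have e : i = 0 := Fin.ext h
          have e' : j = Fin.last n := Fin.ext h'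
          rw [e, e']
          exact h2.symm
      intro i j h
      rcases lt_trichotomy i j with hij | rfl | hij
      · exact key i j hij h
      · simp at h
      · exact (key j i hij h.symm).symm
  have e : {f // IsProperListColoring (SimpleGraph.cycleGraph (n + 1)) L f} ≃
      Σ a : {a // a ∈ L 0}, {f : Fin n → ℕ // (∀ i, f i ∈ L i.succ) ∧
          (a.1 :: List.ofFn f ++ [a.1]).IsChain (· ≠ ·)} := by
    refine ⟨fun f => ⟨⟨f.1 0, f.2.1 0⟩, ⟨fun i => f.1 i.succ, fun i => f.2.1 _,
      (hprop f.1).1 f.2.2⟩⟩, fun p => ⟨Fin.cons p.1.1 p.2.1, ?_, ?_⟩, ?_, ?_⟩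
    · intro i
      cases i using Fin.cases with
      | zero => exact p.1.2
      | succ i => exact p.2.2.1 i
    · exact (hprop _).2 (by simpa using p.2.2.2)
    · intro f
      exact Subtype.ext (Fin.cons_self_tail f.1)
    · rintro ⟨⟨x, hx⟩, ⟨f, hf⟩⟩
      refine Sigma.ext rfl (heq_of_eq (Subtype.ext ?_))
      funext i
      simp
  have := fun a : {a // a ∈ L 0} => finite_subtype_choice (fun i : Fin n => L i.succ)
    fun f => (a.1 :: List.ofFn f ++ [a.1]).IsChain (· ≠ ·)
  rw [numListColorings, Nat.card_congr e, Nat.card_sigma]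
  exact (Finset.sum_congr rfl fun x _ => pathCount_eq_card _ _ _).trans
    (Finset.sum_coe_sort (L 0) fun a => pathCount a _ a)

/-- The closed form for constant lists, for ends inside the list, multiplied by `m` to avoid division and
stated over the integers because of the alternating sign. -/
theorem pathCount_replicate {m : ℕ} {S : Finset ℕ} (hS : S.card = m) (r : ℕ) {a b : ℕ}
    (ha : a ∈ S) (hb : b ∈ S) :
    (m : ℤ) * pathCount a (List.replicate r S) b =
      ((m : ℤ) - 1) ^ (r + 1) + (if a = b then ((m : ℤ) - 1) * (-1) ^ (r + 1) else (-1) ^ r) := by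
  induction r generalizing a with
  | zero => by_cases h : a = b <;> simp [pathCount, h]
  | succ r ih =>
    rw [List.replicate_succ, pathCount, Nat.cast_sum, Finset.mul_sum,
      Finset.sum_congr rfl fun x hx => ih (Finset.mem_erase.1 hx).2, Finset.sum_add_distrib]
    have hcard : ((S.erase a).card : ℤ) = m - 1 := by
      have := Finset.card_erase_add_one ha
      omega
    rw [Finset.sum_const, nsmul_eq_mul, hcard]
    by_cases h : a = b
    · subst h
      rw [Finset.sum_congr rfl fun x hx => if_neg (Finset.mem_erase.1 hx).1, Finset.sum_const,
        nsmul_eq_mul, hcard, if_pos rfl]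
      ring
    · have hb' : b ∈ S.erase a := Finset.mem_erase.2 ⟨Ne.symm h, hb⟩
      rw [← Finset.add_sum_erase _ _ hb', if_pos rfl,
        Finset.sum_congr rfl fun x hx => if_neg (Finset.mem_erase.1 hx).1, Finset.sum_const,
        nsmul_eq_mul, if_neg h]
      have : (((S.erase a).erase b).card : ℤ) = m - 2 := by
        have := Finset.card_erase_add_one hb'
        omega
      rw [this]
      ring

/-- The number of colorings of an even cycle (with `r + 1` vertices) from the same list everywhere. -/
theorem sum_pathCount_replicate {m : ℕ} {S : Finset ℕ} (hS : S.card = m) (hm : 1 ≤ m) {r : ℕ}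
    (hr : Odd r) :
    ∑ a ∈ S, pathCount a (List.replicate r S) a = (m - 1) ^ (r + 1) + (m - 1) := by
  have h : (m : ℤ) * ∑ a ∈ S, (pathCount a (List.replicate r S) a : ℤ) =
      m * ((m - 1) ^ (r + 1) + (m - 1)) := by
    rw [Finset.mul_sum, Finset.sum_congr rfl fun a ha => pathCount_replicate hS r ha ha]
    simp [hS, hr.add_one.neg_one_pow]
  have h' := mul_left_cancel₀ (by positivity) h
  zify [hm]
  exact h'

/-- If the last list misses the end color `c`, each step of the path leaves at least `m - 1` choices. -/
theorem pow_le_pathCount {m : ℕ} {w : Finset ℕ} (hw : w.card = m) {ls : List (Finset ℕ)}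
    (hls : ∀ l ∈ ls, l.card = m) {c : ℕ} (hc : c ∉ w) (a : ℕ) :
    (m - 1) ^ (ls.length + 1) ≤ pathCount a (ls ++ [w]) c := by
  induction ls generalizing a with
  | nil =>
    simp only [List.nil_append, pathCount]
    rw [Finset.sum_congr rfl (g := fun _ => 1) fun x hx => if_neg fun (h : x = c) =>
      hc (h ▸ (Finset.mem_erase.1 hx).2)]
    simpa [← hw] using Finset.pred_card_le_card_erase
  | cons l ls ih =>
    simp only [List.mem_cons, forall_eq_or_imp] at hls
    rw [List.cons_append, pathCount, List.length_cons, pow_succ' _ (ls.length + 1)]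
    refine le_trans (Nat.mul_le_mul_right _ ?_) (Finset.card_nsmul_le_sum _ _ _
      fun x _ => ih hls.2 x)
    rw [← hls.1]
    exact Finset.pred_card_le_card_erase

/-- Each step leaves at least `m - 1` choices, and the last one at least `m - 2`. -/
theorem mul_pow_le_pathCount {m : ℕ} {w : Finset ℕ} (hw : w.card = m) {ls : List (Finset ℕ)}
    (hls : ∀ l ∈ ls, l.card = m) (a b : ℕ) :
    (m - 1) ^ ls.length * (m - 2) ≤ pathCount a (ls ++ [w]) b := by
  induction ls generalizing a with
  | nil =>
    simp only [List.nil_append, pathCount]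
    have h : ∑ x ∈ (w.erase a).erase b, 1 ≤ ∑ x ∈ w.erase a, if x = b then 0 else 1 := by
      rw [Finset.sum_congr rfl (g := fun x => if x = b then 0 else 1) fun x hx =>
        (if_neg (Finset.mem_erase.1 hx).1).symm]
      exact Finset.sum_le_sum_of_subset (Finset.erase_subset _ _)
    have h1 := Finset.pred_card_le_card_erase (s := w) (a := a)
    have h2 := Finset.pred_card_le_card_erase (s := w.erase a) (a := b)
    simp only [Finset.sum_const, smul_eq_mul, mul_one] at h
    simp only [List.length_nil, pow_zero, one_mul]
    omega
  | cons l ls ih =>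
    simp only [List.mem_cons, forall_eq_or_imp] at hls
    rw [List.cons_append, pathCount, List.length_cons, pow_succ', mul_assoc]
    refine le_trans (Nat.mul_le_mul_right _ ?_) (Finset.card_nsmul_le_sum _ _ _
      fun x _ => ih hls.2 x)
    rw [← hls.1]
    exact Finset.pred_card_le_card_erase

/-- A sum of at least `k` terms that are all at least `t`, one of them at least `t + 1`. -/
theorem mul_add_one_le_sum {s : Finset ℕ} {f : ℕ → ℕ} {k t x₀ : ℕ} (hk : k ≤ s.card)
    (hf : ∀ x ∈ s, t ≤ f x) (hx : x₀ ∈ s) (hx' : t + 1 ≤ f x₀) : k * t + 1 ≤ ∑ x ∈ s, f x := by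
  rw [← Finset.add_sum_erase _ _ hx]
  have h : (s.erase x₀).card • t ≤ ∑ x ∈ s.erase x₀, f x :=
    Finset.card_nsmul_le_sum (s.erase x₀) f t fun x hx => hf x (Finset.mem_erase.1 hx).2
  have h2 := Finset.card_erase_add_one hx
  rw [smul_eq_mul] at h
  have h3 : k * t ≤ ((s.erase x₀).card + 1) * t := Nat.mul_le_mul_right _ (by omega)
  rw [add_mul, one_mul] at h3
  omega

/-- For `m ≥ 3` the bound `mul_pow_le_pathCount` is not attained when there are at least three lists:
equality would need every color `y` available before the last step to satisfy `y ≠ b` and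
`y, b ∈ w`, but the list `p` of size `m` is not contained in `w.erase b`. -/
theorem mul_pow_add_one_le_pathCount {m : ℕ} (hm : 3 ≤ m) {p w u : Finset ℕ} (hp : p.card = m)
    (hw : w.card = m) (hu : u.card = m) {ls : List (Finset ℕ)}
    (hls : ∀ l ∈ ls, l.card = m) (a b : ℕ) :
    (m - 1) ^ (ls.length + 2) * (m - 2) + 1 ≤ pathCount a (ls ++ [u, p, w]) b := by
  induction ls generalizing a with
  | nil =>
    obtain ⟨y, hy, hy'⟩ : ∃ y ∈ p, y = b ∨ y ∉ w ∨ b ∉ w := by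
      by_contra! h
      have hb : b ∈ w := by
        obtain ⟨y, hy⟩ : p.Nonempty := Finset.card_pos.1 (by omega)
        exact (h y hy).2.2
      have : p ⊆ w.erase b := fun y hy => Finset.mem_erase.2 ⟨(h y hy).1, (h y hy).2.1⟩
      have := Finset.card_le_card this
      rw [Finset.card_erase_of_mem hb] at this
      omega
    have hyw : (m - 2) + 1 ≤ pathCount y [w] b := by
      simp only [pathCount]
      have h : ∑ x ∈ (w.erase y).erase b, 1 ≤ ∑ x ∈ w.erase y, if x = b then 0 else 1 := by
        rw [Finset.sum_congr rfl (g := fun x => if x = b then 0 else 1) fun x hx =>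
          (if_neg (Finset.mem_erase.1 hx).1).symm]
        exact Finset.sum_le_sum_of_subset (Finset.erase_subset _ _)
      simp only [Finset.sum_const, smul_eq_mul, mul_one] at h
      refine le_trans ?_ h
      have h1 := Finset.pred_card_le_card_erase (s := w) (a := y)
      have h2 := Finset.pred_card_le_card_erase (s := w) (a := b)
      have h3 := Finset.pred_card_le_card_erase (s := w.erase y) (a := b)
      rcases hy' with rfl | h | h
      · rw [Finset.erase_idem]; omega
      · rw [Finset.erase_eq_of_notMem h]; omega
      · rw [Finset.erase_right_comm, Finset.erase_eq_of_notMem h]; omega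
    -- `y` can be reached, through some `x ∈ u` different from `a` and `y`; this uses `m ≥ 3`
    obtain ⟨x, hx⟩ : ((u.erase a).erase y).Nonempty := by
      rw [← Finset.card_pos]
      have h1 := Finset.pred_card_le_card_erase (s := u) (a := a)
      have h2 := Finset.pred_card_le_card_erase (s := u.erase a) (a := y)
      omega
    rw [Finset.mem_erase] at hx
    have key := mul_add_one_le_sum (s := u.erase a) (f := fun x => pathCount x [p, w] b)
      (k := m - 1) (t := (m - 1) * (m - 2)) (by
        rw [← hu]; exact Finset.pred_card_le_card_erase)
      (fun x _ => by simpa using mul_pow_le_pathCount (ls := [p]) hw (by simpa using hp) x b)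
      hx.2 (mul_add_one_le_sum (s := p.erase x) (f := fun x => pathCount x [w] b)
        (by rw [← hp]; exact Finset.pred_card_le_card_erase)
        (fun x _ => by simpa using mul_pow_le_pathCount (ls := []) hw (by simp) x b)
        (Finset.mem_erase.2 ⟨hx.1.symm, hy⟩) hyw)
    simpa [pow_two, mul_assoc, pathCount] using key
  | cons l ls ih =>
    simp only [List.mem_cons, forall_eq_or_imp] at hls
    have h := Finset.card_nsmul_le_sum (l.erase a) _ _ fun x _ => ih hls.2 x
    rw [List.cons_append, pathCount, List.length_cons]
    have h2 : m - 1 ≤ (l.erase a).card := by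
      rw [← hls.1]; exact Finset.pred_card_le_card_erase
    have h3 := Nat.mul_le_mul_right ((m - 1) ^ (ls.length + 2) * (m - 2) + 1) h2
    rw [smul_eq_mul] at h
    refine le_trans ?_ (h3.trans h)
    rw [mul_add, ← mul_assoc, ← pow_succ', mul_one]
    simp only [add_right_comm _ 1 2]
    omega

/-! ### Even cycles -/

/-- With lists of size 2, for each color `b` at the far end at most one starting color is blocked. -/
theorem eq_of_pathCount_eq_zero {ls : List (Finset ℕ)} (hls : ∀ l ∈ ls, l.card = 2) {x y b : ℕ}
    (hx : pathCount x ls b = 0) (hy : pathCount y ls b = 0) : x = y := by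
  induction ls generalizing x y with
  | nil =>
    simp only [pathCount] at hx hy
    grind
  | cons l ls ih =>
    simp only [List.mem_cons, forall_eq_or_imp] at hls
    simp only [pathCount, Finset.sum_eq_zero_iff, Finset.mem_erase] at hx hy
    obtain ⟨p, q, hpq, rfl⟩ := Finset.card_eq_two.1 hls.1
    simp only [Finset.mem_insert, Finset.mem_singleton] at hx hy
    by_contra hxy
    have h1 := ih hls.2 (x := p) (y := q)
    by_cases hp : p = x
    · by_cases hq : q = y
      · exact hpq (h1 (hy p ⟨by grind, by simp⟩) (hx q ⟨by grind, by simp⟩))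
      · exact hpq (h1 (hy p ⟨by grind, by simp⟩) (hy q ⟨by grind, by simp⟩))
    · by_cases hq : q = x
      · by_cases hp' : p = y
        · exact hpq (h1 (hx p ⟨by grind, by simp⟩) (hy q ⟨by grind, by simp⟩))
        · exact hpq (h1 (hy p ⟨by grind, by simp⟩) (hy q ⟨by grind, by simp⟩))
      · exact hpq (h1 (hx p ⟨by grind, by simp⟩) (hx q ⟨by grind, by simp⟩))

theorem one_le_pathCount {w : Finset ℕ} (hw : w.card = 2) {ls : List (Finset ℕ)}
    (hls : ∀ l ∈ ls, l.card = 2) {c : ℕ} (hc : c ∉ w) (a : ℕ) :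
    1 ≤ pathCount a (ls ++ [w]) c := by
  simpa using pow_le_pathCount hw hls hc a

/-- The case `m = 2`: if the starting color `x` admits no coloring ending at `c'`, then a different
starting color `y` admits two colorings ending at `c`, provided `c ∈ {x, y}` and `c` is not in the
last list. This compensates for a term that vanishes in the sum over the color at which the
cycle is cut. -/
theorem two_le_pathCount {w : Finset ℕ} (hw : w.card = 2) {ls : List (Finset ℕ)}
    (hls : ∀ l ∈ ls, l.card = 2) {x y c c' : ℕ} (hxy : x ≠ y) (hc : c = x ∨ c = y) (hcw : c ∉ w)
    (h0 : pathCount x (ls ++ [w]) c' = 0) : 2 ≤ pathCount y (ls ++ [w]) c := by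
  induction ls generalizing x y with
  | nil =>
    simp only [List.nil_append, pathCount, Finset.sum_eq_zero_iff, Finset.mem_erase] at h0 ⊢
    obtain ⟨p, q, hpq, rfl⟩ := Finset.card_eq_two.1 hw
    simp only [Finset.mem_insert, Finset.mem_singleton] at h0 hcw
    have hp := h0 p
    have hq := h0 q
    have : y ∉ ({p, q} : Finset ℕ) := by
      simp only [Finset.mem_insert, Finset.mem_singleton]
      grind
    rw [Finset.erase_eq_of_notMem this, Finset.sum_pair hpq]
    grind
  | cons l ls ih =>
    simp only [List.mem_cons, forall_eq_or_imp] at hls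
    have hone := fun z => one_le_pathCount hw hls.2 hcw z
    simp only [List.cons_append, pathCount, Finset.sum_eq_zero_iff, Finset.mem_erase] at h0 ⊢
    by_cases hy : y ∈ l
    · have hx : x ∈ l := by
        by_contra hx
        obtain ⟨p, q, hpq, rfl⟩ := Finset.card_eq_two.1 hls.1
        simp only [Finset.mem_insert, Finset.mem_singleton] at h0 hx
        exact hpq (eq_of_pathCount_eq_zero (ls := ls ++ [w]) (by
          simpa [or_imp, forall_and, hw] using hls.2) (h0 p (by grind)) (h0 q (by grind)))
      have h1 := ih hls.2 hxy.symm hc.symm (h0 y ⟨hxy.symm, hy⟩)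
      exact h1.trans (Finset.single_le_sum (f := fun z => pathCount z (ls ++ [w]) c)
        (fun _ _ => Nat.zero_le _) (Finset.mem_erase.2 ⟨hxy, hx⟩))
    · rw [Finset.erase_eq_of_notMem hy]
      have := Finset.card_nsmul_le_sum l _ _ fun z _ => hone z
      simpa [hls.1] using this

/-- If the first list `A` and the last list `w` differ, the cycle has at least as many colorings as
an even cycle of the same length from constant lists. A color `c ∈ A \ w` contributes at least
`(m - 1) ^ (ls.length + 3)`. For `m ≥ 3` each of the other `m - 1` colors contributes at least
`(m - 1) ^ (ls.length + 2) * (m - 2) + 1`, and these bounds add up to the claim; for `m = 2`, where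
the claim is that there are two colorings, `two_le_pathCount` is used. -/
theorem le_sum_pathCount {m : ℕ} (hm : 2 ≤ m) {A w u p : Finset ℕ} {ls : List (Finset ℕ)}
    (hA : A.card = m) (hw : w.card = m) (hu : u.card = m) (hp : p.card = m)
    (hls : ∀ l ∈ ls, l.card = m) (hAw : A ≠ w) :
    (m - 1) ^ (ls.length + 4) + (m - 1) ≤ ∑ a ∈ A, pathCount a (ls ++ [u, p, w]) a := by
  obtain ⟨c, hc, hcw⟩ : ∃ c ∈ A, c ∉ w := by
    by_contra! h
    exact hAw (Finset.eq_of_subset_of_card_le h (by omega))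
  have hls' : ∀ l ∈ ls ++ [u, p], l.card = m := by
    simpa [or_imp, forall_and, hu, hp] using hls
  have happ : ls ++ [u, p, w] = (ls ++ [u, p]) ++ [w] := by simp
  rw [← Finset.add_sum_erase _ _ hc]
  rcases hm.eq_or_lt with rfl | hm
  · obtain ⟨c', hc'⟩ : (A.erase c).Nonempty := by
      rw [← Finset.card_pos, Finset.card_erase_of_mem hc]; omega
    have h1 := Finset.single_le_sum (f := fun a => pathCount a (ls ++ [u, p, w]) a)
      (fun _ _ => Nat.zero_le _) hc'
    have h2 := one_le_pathCount hw hls' hcw c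
    have h3 := fun h0 => two_le_pathCount hw hls' (Finset.mem_erase.1 hc').1 (Or.inr rfl) hcw
      (c' := c') h0
    simp only [Nat.add_one_sub_one, one_pow]
    simp only [happ] at h1 h2 h3 ⊢
    omega
  · have h1 := pow_le_pathCount hw hls' hcw c
    have h2 := Finset.card_nsmul_le_sum (A.erase c) (fun a => pathCount a (ls ++ [u, p, w]) a) _
      fun a _ => mul_pow_add_one_le_pathCount hm hp hw hu hls a a
    rw [Finset.card_erase_of_mem hc, hA, smul_eq_mul] at h2
    simp only [List.length_append, List.length_cons, List.length_nil] at h1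
    rw [← happ] at h1
    refine le_trans (le_of_eq ?_) (add_le_add h1 h2)
    obtain ⟨q, rfl⟩ : ∃ q, m = q + 2 := ⟨m - 2, by omega⟩
    simp only [Nat.add_sub_cancel, show q + 2 - 1 = q + 1 by omega]
    ring

/-- If the lists are not constant, two consecutive ones differ, and the cycle is cut between them. -/
theorem isGood_cycleGraph {k : ℕ} (hk : 1 ≤ k) : IsGood (SimpleGraph.cycleGraph (2 * k + 2)) := by
  intro m hm L hL
  have hconst : ∀ S : Finset ℕ, S.card = m →
      numListColorings (SimpleGraph.cycleGraph (2 * k + 2)) (fun _ => S) =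
        (m - 1) ^ (2 * k + 2) + (m - 1) := by
    intro S hS
    rw [numListColorings_cycleGraph (n := 2 * k + 1) (by omega), List.ofFn_const,
      sum_pathCount_replicate hS (by omega) ⟨k, rfl⟩]
  rw [chromPoly, hconst _ (by simp)]
  by_cases hcon : ∀ i : Fin (2 * k + 2), L i = L (i + 1)
  · have : L = fun _ => L 0 := by
      funext i
      induction i using Fin.induction with
      | zero => rfl
      | succ i ih => rw [← ih, hcon i.castSucc, Fin.coeSucc_eq_succ]
    rw [this, hconst _ (hL 0)]
  · push Not at hcon
    obtain ⟨i, hi⟩ := hcon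
    let φ : SimpleGraph.cycleGraph (2 * k + 2) ≃g SimpleGraph.cycleGraph (2 * k + 2) :=
      { toEquiv := Equiv.subRight (i + 1)
        map_rel_iff' := by
          intro a b
          simp [SimpleGraph.cycleGraph_adj'] }
    rw [numListColorings_iso φ, numListColorings_cycleGraph (n := 2 * k + 1) (by omega)]
    obtain ⟨j, rfl⟩ : ∃ j, k = j + 1 := ⟨k - 1, by omega⟩
    have hφ : ∀ x, φ.symm x = x + (i + 1) := fun _ => rfl
    simp only [hφ, zero_add]
    rw [show (fun r : Fin (2 * (j + 1) + 1) => L (r.succ + (i + 1))) =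
      (fun r : Fin (2 * j + 3) => L ((r.succ : Fin (2 * j + 4)) + (i + 1))) from rfl]
    rw [List.ofFn_succ', List.concat_eq_append, List.ofFn_succ', List.concat_eq_append,
      List.ofFn_succ', List.concat_eq_append]
    have h := le_sum_pathCount hm (hL (i + 1))
      (hL ((Fin.last (2 * j + 2)).succ + (i + 1)))
      (hL ((Fin.last (2 * j)).castSucc.castSucc.succ + (i + 1)))
      (hL ((Fin.last (2 * j + 1)).castSucc.succ + (i + 1)))
      (ls := List.ofFn fun r : Fin (2 * j) => L (r.castSucc.castSucc.castSucc.succ + (i + 1)))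
      (by simp [List.mem_ofFn, hL]) (by
        rw [Fin.succ_last]
        have : Fin.last (2 * j + 3) + (i + 1) = i := by
          rw [add_comm i 1, ← add_assoc, Fin.last_add_one, zero_add]
        rw [this]
        exact hi.symm)
    have e : (m - 1) ^ (2 * (j + 1) + 2) = (m - 1) ^ (2 * j + 4) := by congr 1
    rw [e]
    simpa using h

/-! ### Counting for the complete bipartite graph on 2 + 3 vertices: auxiliary inequalities -/

/-- A coloring of `K_{2,3}` consists of colors `a`, `b` on the side of size 2 and independent choices on
the side of size 3. -/
theorem numListColorings_K23 (L : Fin 2 ⊕ Fin 3 → Finset ℕ) :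
    numListColorings (completeBipartiteGraph (Fin 2) (Fin 3)) L =
      ∑ a ∈ L (.inl 0), ∑ b ∈ L (.inl 1), ∏ i, (L (.inr i) \ {a, b}).card := by
  have e : {f // IsProperListColoring (completeBipartiteGraph (Fin 2) (Fin 3)) L f} ≃
      Σ p : {p // p ∈ L (.inl 0) ×ˢ L (.inl 1)},
        {g // g ∈ Fintype.piFinset fun i => L (.inr i) \ {p.1.1, p.1.2}} := by
    refine ⟨fun f => ⟨⟨(f.1 (.inl 0), f.1 (.inl 1)), Finset.mem_product.2 ⟨f.2.1 _, f.2.1 _⟩⟩,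
      ⟨fun i => f.1 (.inr i), ?_⟩⟩, fun p => ⟨Sum.elim ![p.1.1.1, p.1.1.2] p.2.1, ?_, ?_⟩, ?_, ?_⟩
    · rw [Fintype.mem_piFinset]
      intro i
      have h := fun j => f.2.2 (show (completeBipartiteGraph (Fin 2) (Fin 3)).Adj
        (.inr i) (.inl j) by simp)
      simp [f.2.1, h]
    · have h1 := Finset.mem_product.1 p.1.2
      have h2 := Fintype.mem_piFinset.1 p.2.2
      rintro (i | i)
      · fin_cases i
        · exact h1.1
        · exact h1.2
      · exact (Finset.mem_sdiff.1 (h2 i)).1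
    · have h2 := Fintype.mem_piFinset.1 p.2.2
      have h3 : ∀ (j : Fin 2) (i : Fin 3), (![p.1.1.1, p.1.1.2] : Fin 2 → ℕ) j ≠ p.2.1 i := by
        intro j i h
        have := (Finset.mem_sdiff.1 (h2 i)).2
        rw [← h] at this
        fin_cases j <;> simp at this
      rintro (j | i) (j' | i') h
      · simp at h
      · exact h3 j i'
      · exact (h3 j' i).symm
      · simp at h
    · intro f
      apply Subtype.ext
      funext x
      rcases x with j | i
      · fin_cases j <;> rfl
      · rfl
    · intro p
      rfl
  rw [numListColorings, Nat.card_congr e, Nat.card_sigma, ← Finset.sum_product']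
  refine (Finset.sum_congr rfl fun p _ => ?_).trans (Finset.sum_coe_sort
    (L (.inl 0) ×ˢ L (.inl 1)) fun p => ∏ i, (L (.inr i) \ {p.1, p.2}).card)
  rw [Nat.card_eq_fintype_card, Fintype.card_coe, Fintype.card_piFinset]

/-- Sets of equal size have a bijection `s : A → B` that is the identity on `A ∩ B`. The last clause says
that the sets `{a, s a}` are disjoint for different `a`, once injectivity is known. -/
theorem exists_matching {A B : Finset ℕ} (h : A.card = B.card) :
    ∃ s : ℕ → ℕ, (∀ F : ℕ → ℕ, ∑ b ∈ B, F b = ∑ a ∈ A, F (s a)) ∧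
      Set.InjOn s A ∧ ∀ a ∈ A, ∀ a' ∈ A, a = s a' → a = a' := by
  have hc : (A \ B).card = (B \ A).card := Finset.card_sdiff_comm h
  have e := Finset.equivOfCardEq hc
  have h1 : ∀ a (h : a ∈ A \ B), ((e ⟨a, h⟩ : ℕ) ∈ B ∧ (e ⟨a, h⟩ : ℕ) ∉ A) := fun a h =>
    Finset.mem_sdiff.1 (e ⟨a, h⟩).2
  have hinj : Set.InjOn (fun a => if h : a ∈ A \ B then (e ⟨a, h⟩ : ℕ) else a) A := by
    intro a ha a' ha' hs
    simp only at hs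
    split_ifs at hs with h h' h'
    · simpa using e.injective (Subtype.ext hs)
    · exact absurd (hs ▸ ha') (h1 a h).2
    · exact absurd (hs ▸ ha) (h1 a' h').2
    · exact hs
  refine ⟨fun a => if h : a ∈ A \ B then e ⟨a, h⟩ else a, fun F => ?_, hinj, ?_⟩
  · symm
    refine Finset.sum_nbij _ (fun a ha => ?_) hinj ?_ fun _ _ => rfl
    · split_ifs with h
      · exact (h1 a h).1
      · simpa [ha] using h
    · refine Finset.surjOn_of_injOn_of_card_le _ (fun a ha => ?_) hinj h.ge
      split_ifs with h
      · exact (h1 a h).1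
      · simp only [Finset.mem_coe] at ha
        simpa [ha] using h
  · intro a ha a' ha' hs
    simp only at hs
    split_ifs at hs with h
    · exact absurd (hs ▸ ha) (h1 a' h).2
    · exact hs

/-- The bound for a diagonal pair `(a, s a)`. Here `p = m - 1`, and `M i` has `p + u i` colors outside
`{a, s a}`; `g i` is the number of the two entries `a`, `s a` not in `M i`, so `u i = 1` means that
both are missing. The product may lie below its linear approximation, and the term with `g`
repairs the deficit. -/
theorem diagonal_bound {p : ℤ} (hp : 2 ≤ p) {u g : Fin 3 → ℤ} (hu : ∀ i, -1 ≤ u i ∧ u i ≤ 1)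
    (hg : ∀ i, 0 ≤ g i) (hug : ∀ i, u i = 1 → g i = 2) :
    p ^ 3 + p ^ 2 * ∑ i, u i ≤ ∏ i, (p + u i) + p * (p - 1) ^ 2 * ∑ i, g i := by
  rw [Fin.sum_univ_three, Fin.sum_univ_three, Fin.prod_univ_three]
  have hc : ∀ i, (u i = 1 ∧ g i = 2) ∨ u i = 0 ∨ u i = -1 := fun i => by
    have := hu i
    have := hug i
    omega
  have hq : p ≤ p * (p - 1) ^ 2 := by nlinarith [sq_nonneg (p - 1)]
  set Q := p * (p - 1) ^ 2 with hQ
  have hmul : ∀ i, 0 ≤ Q * g i := fun i => mul_nonneg (by omega) (hg i)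
  have h0 := hmul 0
  have h1 := hmul 1
  have h2 := hmul 2
  rcases hc 0 with ⟨e0, g0⟩ | e0 | e0 <;> rcases hc 1 with ⟨e1, g1⟩ | e1 | e1 <;>
    rcases hc 2 with ⟨e2, g2⟩ | e2 | e2 <;> rw [e0, e1, e2] <;>
    (try rw [g0] at h0 ⊢) <;> (try rw [g1] at h1 ⊢) <;> (try rw [g2] at h2 ⊢) <;>
    nlinarith

/-- The bound for a pair `(a, b)` with `a ≠ b`: here `p = m - 1`, and `e i`, `f i` are 1 or 0 according
to whether `a`, `b` are missing from `M i`. The product is at least its linear part. -/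
theorem offdiagonal_bound {p : ℤ} (hp : 1 ≤ p) {e f : Fin 3 → ℤ} (he : ∀ i, 0 ≤ e i)
    (hf : ∀ i, 0 ≤ f i) :
    (p - 1) ^ 3 + (p - 1) ^ 2 * (∑ i, e i + ∑ i, f i) ≤ ∏ i, (p - 1 + e i + f i) := by
  obtain ⟨q, rfl⟩ : ∃ q, p = q + 1 := ⟨p - 1, by omega⟩
  rw [Fin.sum_univ_three, Fin.sum_univ_three, Fin.prod_univ_three]
  have hq : 0 ≤ q := by omega
  have h : ∀ i, ∃ x, 0 ≤ x ∧ e i + f i = x := fun i => ⟨_, add_nonneg (he i) (hf i), rfl⟩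
  obtain ⟨x, hx, ex⟩ := h 0
  obtain ⟨y, hy, ey⟩ := h 1
  obtain ⟨z, hz, ez⟩ := h 2
  simp only [add_sub_cancel_right, add_assoc, ex, ey, ez]
  have e1 : e 0 + (e 1 + e 2 + (f 0 + (f 1 + f 2))) = x + y + z := by
    rw [← ex, ← ey, ← ez]; ring
  have e2 : e 0 + (e 1 + (e 2 + (f 0 + (f 1 + f 2)))) = x + y + z := by
    rw [← ex, ← ey, ← ez]; ring
  rw [e2]
  have : (q + x) * ((q + y) * (q + z)) - (q ^ 3 + q ^ 2 * (x + y + z)) =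
    q * (x * y) + q * (y * z) + q * (x * z) + x * y * z := by ring
  have : 0 ≤ q * (x * y) + q * (y * z) + q * (x * z) + x * y * z := by positivity
  linarith [mul_assoc (q + x) (q + y) (q + z)]

/-- The case `m = 2`, where the four pairs of colors on the side of size 2 give four products, `α`, `β`
for one pair of disjoint choices and `γ`, `δ` for the other. If three of the products vanish, they
do so at three different indices, and the fourth product is at least 2. -/
theorem two_le_prod_of_opposite {α β γ δ : Fin 3 → ℕ} (hcd : ∀ i, 2 ≤ γ i + δ i)
    (hac : ∀ i, α i = 0 → 1 ≤ γ i ∧ 1 ≤ δ i) (hbc : ∀ i, β i = 0 → 1 ≤ γ i ∧ 1 ≤ δ i)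
    (hab : ∀ i, 2 ≤ α i + β i) (hα : ∏ i, α i = 0) (hβ : ∏ i, β i = 0) (hγ : ∏ i, γ i = 0) :
    2 ≤ ∏ i, δ i := by
  obtain ⟨i, -, hi⟩ := Finset.prod_eq_zero_iff.1 hα
  obtain ⟨j, -, hj⟩ := Finset.prod_eq_zero_iff.1 hβ
  obtain ⟨k, -, hk⟩ := Finset.prod_eq_zero_iff.1 hγ
  have hij : i ≠ j := by rintro rfl; have := hab i; omega
  have hik : i ≠ k := by rintro rfl; have := hac i hi; omega
  have hjk : j ≠ k := by rintro rfl; have := hbc j hj; omega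
  have hδk : 2 ≤ δ k := by have := hcd k; omega
  have hall : ∀ l, 0 < δ l := by
    intro l
    have : l = i ∨ l = j ∨ l = k := by omega
    rcases this with rfl | rfl | rfl
    · exact (hac l hi).2
    · exact (hbc l hj).2
    · omega
  exact hδk.trans (Nat.le_of_dvd (Finset.prod_pos fun l _ => hall l)
    (Finset.dvd_prod_of_mem δ (Finset.mem_univ k)))

/-- The case `m = 2` when some color lies in both lists on the side of size 2 and is used twice, so that
no factor `α i` vanishes. -/
theorem two_le_add_prod {α β : Fin 3 → ℕ} (hab : ∀ i, 2 ≤ α i + β i) (hα : ∀ i, 1 ≤ α i) :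
    2 ≤ ∏ i, α i + ∏ i, β i := by
  have hα' : 0 < ∏ i, α i := Finset.prod_pos fun i _ => hα i
  by_cases h : ∃ k, 2 ≤ α k
  · obtain ⟨k, hk⟩ := h
    have := Nat.le_of_dvd hα' (Finset.dvd_prod_of_mem α (Finset.mem_univ k))
    omega
  · push Not at h
    have hβ : 0 < ∏ i, β i := Finset.prod_pos fun i _ => by
      have := h i
      have := hab i
      omega
    omega

/-! ### The complete bipartite graph on 2 + 3 vertices -/

theorem card_inter_pair (M : Finset ℕ) {a b : ℕ} (hab : a ≠ b) :
    (M ∩ {a, b}).card = (M ∩ {a}).card + (M ∩ {b}).card := by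
  rw [Finset.insert_eq, Finset.inter_union_distrib_left, Finset.card_union_of_disjoint]
  rw [Finset.disjoint_left]
  intro x hx hx'
  simp only [Finset.mem_inter, Finset.mem_singleton] at hx hx'
  exact hab (hx.2.symm.trans hx'.2)

theorem card_inter_singleton_le (M : Finset ℕ) (a : ℕ) : (M ∩ {a}).card ≤ 1 :=
  (Finset.card_le_card Finset.inter_subset_right).trans_eq (Finset.card_singleton a)

/-- The lists `A`, `B` on the side of size 2 are matched by `s : A → B`, the identity on `A ∩ B`. The
diagonal pairs `(a, s a)` are bounded by `diagonal_bound`, the others by `offdiagonal_bound`. In the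
sum over all pairs the terms counting missing single colors (`E`) cancel, and what remains
besides the constant-list value is a multiple of `∑ a, U a`, which is nonnegative because the sets
`{a, s a}` are disjoint. For `m = 2`, where only two colorings are needed, the four products are
treated directly. -/
theorem le_sum_K23 {m : ℕ} (hm : 2 ≤ m) {A B : Finset ℕ} {M : Fin 3 → Finset ℕ}
    (hA : A.card = m) (hB : B.card = m) (hM : ∀ i, (M i).card = m) :
    m * (m - 1) ^ 3 + m * (m - 1) * (m - 2) ^ 3 ≤
      ∑ a ∈ A, ∑ b ∈ B, ∏ i, (M i \ {a, b}).card := by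
  obtain ⟨s, hs, hinj, hfix⟩ := exists_matching (hA.trans hB.symm)
  have hD : ∀ i a b, (M i \ {a, b}).card + (M i ∩ {a, b}).card = m := fun i a b => by
    rw [← hM i]; exact Finset.card_sdiff_add_card_inter _ _
  have hsing := fun i a => card_inter_singleton_le (M i) a
  -- the sets `{a, s a}` are pairwise disjoint, so they meet each list in at most `m` elements
  have hsum : ∀ i, ∑ a ∈ A, (M i ∩ {a, s a}).card ≤ m := by
    intro i
    rw [← Finset.card_biUnion, ← hM i]
    · exact Finset.card_le_card (Finset.biUnion_subset.2 fun _ _ => Finset.inter_subset_left)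
    · intro a ha a' ha' haa
      rw [Function.onFun, Finset.disjoint_left]
      intro x hx hx'
      simp only [Finset.mem_inter, Finset.mem_insert, Finset.mem_singleton] at hx hx'
      rcases hx.2 with rfl | rfl <;> rcases hx'.2 with h | h
      · exact haa h
      · exact haa (hfix _ ha _ ha' h)
      · exact haa (hfix _ ha' _ ha h.symm).symm
      · exact haa (hinj ha ha' h)
  have hoff : ∀ a ∈ A, ∀ a' ∈ A, a ≠ a' → a ≠ s a' := fun a ha a' ha' h e =>
    h (hfix a ha a' ha' e)
  have htot : ∑ a ∈ A, ∑ b ∈ B, ∏ i, (M i \ {a, b}).card =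
      ∑ a ∈ A, ∑ a' ∈ A, ∏ i, (M i \ {a, s a'}).card :=
    Finset.sum_congr rfl fun a _ => hs _
  rw [htot]
  rcases hm.eq_or_lt with rfl | hm
  · obtain ⟨x, y, hxy, rfl⟩ := Finset.card_eq_two.1 hA
    simp only [Finset.sum_pair hxy] at hsum ⊢
    have hx : x ∈ ({x, y} : Finset ℕ) := by simp
    have hy : y ∈ ({x, y} : Finset ℕ) := by simp
    have hab : ∀ i, 2 ≤ (M i \ {x, s x}).card + (M i \ {y, s y}).card := fun i => by
      have := hsum i
      have := hD i x (s x)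
      have := hD i y (s y)
      omega
    rw [show 2 * (2 - 1) ^ 3 + 2 * (2 - 1) * (2 - 2) ^ 3 = 2 from rfl]
    by_cases h1 : x = s x
    · have := two_le_add_prod hab fun i => by
        have := hD i x (s x)
        rw [← h1, Finset.pair_eq_singleton] at *
        have := hsing i x
        omega
      omega
    by_cases h2 : y = s y
    · have := two_le_add_prod (fun i => (hab i).trans_eq (add_comm _ _)) fun i => by
        have := hD i y (s y)
        rw [← h2, Finset.pair_eq_singleton] at *
        have := hsing i y
        omega
      omega
    have h3 := hoff x hx y hy hxy
    have h4 := hoff y hy x hx hxy.symm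
    have hi := fun i => And.intro (card_inter_pair (M i) h1) (And.intro
      (card_inter_pair (M i) h2) (And.intro (card_inter_pair (M i) h3) (card_inter_pair (M i) h4)))
    have hDi := fun i => And.intro (hD i x (s x)) (And.intro (hD i y (s y))
      (And.intro (hD i x (s y)) (hD i y (s x))))
    have hcd : ∀ i, 2 ≤ (M i \ {x, s y}).card + (M i \ {y, s x}).card := fun i => by
      have := hsum i
      have := hi i
      have := hDi i
      omega
    have hle := fun i => And.intro (hsing i x) (And.intro (hsing i y)
      (And.intro (hsing i (s x)) (hsing i (s y))))
    have hcross : ∀ i, ((M i \ {x, s x}).card = 0 ∨ (M i \ {y, s y}).card = 0) →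
        1 ≤ (M i \ {x, s y}).card ∧ 1 ≤ (M i \ {y, s x}).card := fun i h => by
      have := hsum i
      have := hi i
      have := hDi i
      have := hle i
      omega
    have hcross' : ∀ i, ((M i \ {x, s y}).card = 0 ∨ (M i \ {y, s x}).card = 0) →
        1 ≤ (M i \ {x, s x}).card ∧ 1 ≤ (M i \ {y, s y}).card := fun i h => by
      have := hcross i
      omega
    have k1 := two_le_prod_of_opposite hcd (fun i h => hcross i (.inl h))
      (fun i h => hcross i (.inr h)) hab
    have k2 := two_le_prod_of_opposite (fun i => (hcd i).trans_eq (add_comm _ _))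
      (fun i h => (hcross i (.inl h)).symm) (fun i h => (hcross i (.inr h)).symm) hab
    have k3 := two_le_prod_of_opposite hab (fun i h => hcross' i (.inl h))
      (fun i h => hcross' i (.inr h)) hcd
    have k4 := two_le_prod_of_opposite (fun i => (hab i).trans_eq (add_comm _ _))
      (fun i h => (hcross' i (.inl h)).symm) (fun i h => (hcross' i (.inr h)).symm) hcd
    omega
  · obtain ⟨p, hp⟩ : ∃ p : ℤ, p = m - 1 := ⟨_, rfl⟩
    have hp2 : 2 ≤ p := by omega
    -- `E x` is the number of lists on the side of size 3 that miss `x`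
    obtain ⟨E, hE⟩ : ∃ E : ℕ → ℤ, E = fun x => ∑ i, (1 - ((M i ∩ {x}).card : ℤ)) := ⟨_, rfl⟩
    have hcast : ∀ i a b, ((M i \ {a, b}).card : ℤ) = p + (1 - ((M i ∩ {a, b}).card : ℤ)) :=
      fun i a b => by have := hD i a b; omega
    have hoffb : ∀ a b, a ≠ b →
        (p - 1) ^ 3 + (p - 1) ^ 2 * (E a + E b) ≤ ∏ i, ((M i \ {a, b}).card : ℤ) := by
      intro a b hab
      rw [hE]
      refine (offdiagonal_bound (by omega) (fun i => ?_) (fun i => ?_)).trans_eq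
        (Finset.prod_congr rfl fun i _ => ?_)
      · have := hsing i a; omega
      · have := hsing i b; omega
      · rw [hcast, card_inter_pair _ hab]; push_cast; ring
    have hdiag : ∀ a, p ^ 3 + p ^ 2 * ∑ i, (1 - ((M i ∩ {a, s a}).card : ℤ)) ≤
        ∏ i, ((M i \ {a, s a}).card : ℤ) + p * (p - 1) ^ 2 * (E a + E (s a)) := by
      intro a
      have hle := fun i => And.intro (hsing i a) (hsing i (s a))
      have hcase : ∀ i, (M i ∩ {a, s a}).card ≤ 2 ∧ ((M i ∩ {a, s a}).card = 0 →
          (M i ∩ {a}).card = 0 ∧ (M i ∩ {s a}).card = 0) := fun i => by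
        have := hle i
        by_cases h : a = s a
        · rw [← h, Finset.pair_eq_singleton] at *; omega
        · have := card_inter_pair (M i) h; omega
      have hEE : E a + E (s a) = ∑ i, ((1 - ((M i ∩ {a}).card : ℤ)) +
          (1 - ((M i ∩ {s a}).card : ℤ))) := by rw [hE, Finset.sum_add_distrib]
      rw [hEE, Finset.prod_congr rfl fun i _ => hcast i a (s a)]
      refine diagonal_bound hp2 (fun i => ?_) (fun i => ?_) (fun i h => ?_)
      · have := hcase i; omega
      · have := hle i; omega
      · have := hcase i; omega
    have hAp : (A.card : ℤ) = p + 1 := by omega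
    have hoffsum : ∀ a ∈ A, p * (p - 1) ^ 3 + (p - 1) ^ 2 * (p * E a +
        (∑ a' ∈ A, E (s a') - E (s a))) ≤
          ∑ a' ∈ A.erase a, ∏ i, ((M i \ {a, s a'}).card : ℤ) := by
      intro a ha
      refine le_trans (le_of_eq ?_) (Finset.sum_le_sum fun a' ha' => hoffb a (s a')
        (hoff a ha a' (Finset.mem_erase.1 ha').2 (Finset.mem_erase.1 ha').1.symm))
      have hcard : ((A.erase a).card : ℤ) = p := by
        have := Finset.card_erase_add_one ha; omega
      rw [Finset.sum_add_distrib, Finset.sum_const, nsmul_eq_mul, hcard, ← Finset.mul_sum,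
        Finset.sum_add_distrib, Finset.sum_const, nsmul_eq_mul, hcard,
        ← Finset.add_sum_erase A _ ha]
      ring
    have hu : 0 ≤ ∑ a ∈ A, ∑ i, (1 - ((M i ∩ {a, s a}).card : ℤ)) := by
      rw [Finset.sum_comm]
      refine Finset.sum_nonneg fun i _ => ?_
      rw [Finset.sum_sub_distrib, Finset.sum_const, hA]
      have := hsum i
      zify at this
      simpa using this
    -- `U a` measures by how much the lists on the side of size 3 avoid `{a, s a}`
    obtain ⟨U, hU⟩ : ∃ U : ℕ → ℤ, U = fun a => ∑ i, (1 - ((M i ∩ {a, s a}).card : ℤ)) := ⟨_, rfl⟩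
    replace hu : 0 ≤ ∑ a ∈ A, U a := by rw [hU]; exact hu
    replace hdiag : ∀ a, p ^ 3 + p ^ 2 * U a ≤
        ∏ i, ((M i \ {a, s a}).card : ℤ) + p * (p - 1) ^ 2 * (E a + E (s a)) := by
      rw [hU]; exact hdiag
    have hrow : ∀ a ∈ A, p ^ 3 + p ^ 2 * U a -
        p * (p - 1) ^ 2 * (E a + E (s a)) + (p * (p - 1) ^ 3 + (p - 1) ^ 2 * (p * E a +
        (∑ a' ∈ A, E (s a') - E (s a)))) ≤
          ∑ a' ∈ A, ∏ i, ((M i \ {a, s a'}).card : ℤ) := by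
      intro a ha
      have := hdiag a
      have := hoffsum a ha
      have := Finset.add_sum_erase A (fun a' => ∏ i, ((M i \ {a, s a'}).card : ℤ)) ha
      linarith
    -- summing over `a`, the coefficients of `∑ E a` and of `∑ E (s a)` both vanish
    have hfin := Finset.sum_le_sum hrow
    simp only [Finset.sum_add_distrib, Finset.sum_sub_distrib, ← Finset.mul_sum,
      Finset.sum_const, nsmul_eq_mul, hAp] at hfin
    have hpos : 0 ≤ p ^ 2 * ∑ a ∈ A, U a := mul_nonneg (sq_nonneg p) hu
    have e1 : ((m - 1 : ℕ) : ℤ) = p := by omega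
    have e2 : ((m - 2 : ℕ) : ℤ) = p - 1 := by omega
    have e3 : (m : ℤ) = p + 1 := by omega
    zify
    rw [e1, e2, e3]
    linarith

theorem isGood_K23 : IsGood (completeBipartiteGraph (Fin 2) (Fin 3)) := by
  intro m hm L hL
  have hconst : chromPoly (completeBipartiteGraph (Fin 2) (Fin 3)) m =
      m * (m - 1) ^ 3 + m * (m - 1) * (m - 2) ^ 3 := by
    rw [chromPoly, numListColorings_K23]
    have hS : (Finset.Icc 1 m).card = m := by simp
    generalize Finset.Icc 1 m = S at hS
    have key : ∀ a ∈ S, ∑ b ∈ S, ∏ _i : Fin 3, (S \ {a, b}).card =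
        (m - 1) ^ 3 + (m - 1) * (m - 2) ^ 3 := by
      intro a ha
      rw [← Finset.add_sum_erase _ _ ha, Finset.sum_congr rfl (g := fun _ => (m - 2) ^ 3)]
      · simp [Finset.card_sdiff_of_subset, ha, hS]
      · intro b hb
        have hb := Finset.mem_erase.1 hb
        have : ({a, b} : Finset ℕ) ⊆ S := by
          simp [Finset.insert_subset_iff, ha, hb.2]
        rw [Finset.card_sdiff_of_subset this, Finset.card_pair hb.1.symm, hS]
        simp
    rw [Finset.sum_congr rfl key, Finset.sum_const, hS, smul_eq_mul]
    ring
  rw [hconst, numListColorings_K23]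
  exact le_sum_K23 hm (hL _) (hL _) fun i => hL (.inr i)

/-- Let `G` be a connected graph with chromatic number 2.  Then `G` is enumeratively
chromatic-choosable (`P_ℓ(G,m) = P(G,m)` for all `m ≥ χ(G) = 2`) if and only if the core of
`G` (obtained by successively deleting vertices of degree 1) is a copy of `K₁`,
of `C_{2k+2}` for some `k ≥ 1`, or of `K_{2,3}`. -/
theorem enumeratively_chromatic_choosable_iff_core
    {V : Type*} [Fintype V] (G : SimpleGraph V)
    (hconn : G.Connected) (hchi : G.chromaticNumber = 2) :
    (∀ m : ℕ, 2 ≤ m → listColorFn G m = chromPoly G m) ↔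
    ∃ S : Set V,
      Relation.ReflTransGen (DelStep G) Set.univ S ∧
      (∀ v ∈ S, {w ∈ S | G.Adj v w}.ncard ≠ 1) ∧
      (Nonempty (G.induce S ≃g (⊤ : SimpleGraph (Fin 1))) ∨
       (∃ k : ℕ, 1 ≤ k ∧ Nonempty (G.induce S ≃g SimpleGraph.cycleGraph (2*k+2))) ∨
       Nonempty (G.induce S ≃g completeBipartiteGraph (Fin 2) (Fin 3))) := by
  constructor
  · exact fun h => core_of_eq hconn
      (SimpleGraph.chromaticNumber_le_iff_colorable.1 hchi.le) (h 2 le_rfl)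
  · rintro ⟨S, hS, -, hcore⟩ m hm
    have hgood : IsGood (G.induce S) := by
      rcases hcore with ⟨⟨φ⟩⟩ | ⟨k, hk, ⟨φ⟩⟩ | ⟨⟨φ⟩⟩
      · exact isGood_top_one.of_iso φ
      · exact (isGood_cycleGraph hk).of_iso φ
      · exact isGood_K23.of_iso φ
    exact ((hgood.of_core hS).of_iso (SimpleGraph.induceUnivIso G).symm).listColorFn_eq hm
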